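/- arXiv:math/0408258 — 7 statements merged into one kernel-verified Lean document; each statement's English description precedes it below -/
import Mathlib

section
/- Let (A, ρ) be a pre-Lie coalgebra over a commutative ring R and let (U, θ) be a left comodule over (A, ρ). Define a right action of A* on U by u·f = Σ_i ⟨u'_i, f⟩ u''_i for θ(u) = Σ_i u'_i ⊗ u''_i, and let [f, g] = f ⋆_ρ g − g ⋆_ρ f be the Lie bracket on A* induced by ρ. Then u·[f, g] = (u·f)·g − (u·g)·f for all u ∈ U and f, g ∈ A*; i.e., this is a right Lie algebra action of A* on U. -/
open scoped TensorProduct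

/-- `ρ̃ = (id ⊗ ρ)ρ − (ρ ⊗ id)ρ : A → A ⊗ A ⊗ A`. -/
noncomputable def tilde {R A : Type*} [CommRing R] [AddCommGroup A] [Module R A]
    (ρ : A →ₗ[R] A ⊗[R] A) : A →ₗ[R] A ⊗[R] (A ⊗[R] A) :=
  LinearMap.lTensor A ρ ∘ₗ ρ -
    (TensorProduct.assoc R A A A).toLinearMap ∘ₗ LinearMap.rTensor A ρ ∘ₗ ρ

/-- `θ̃ = (id_A ⊗ θ)θ − (ρ ⊗ id_U)θ : U → A ⊗ A ⊗ U`. -/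
noncomputable def tildeComod {R A U : Type*} [CommRing R] [AddCommGroup A] [Module R A]
    [AddCommGroup U] [Module R U] (ρ : A →ₗ[R] A ⊗[R] A) (θ : U →ₗ[R] A ⊗[R] U) :
    U →ₗ[R] A ⊗[R] (A ⊗[R] U) :=
  LinearMap.lTensor A θ ∘ₗ θ -
    (TensorProduct.assoc R A A U).toLinearMap ∘ₗ LinearMap.rTensor U ρ ∘ₗ θ

/-- The multiplication `⋆_ρ` on `A*`. -/
noncomputable def starDual {R A : Type*} [CommRing R] [AddCommGroup A] [Module R A]
    (ρ : A →ₗ[R] A ⊗[R] A) (f g : A →ₗ[R] R) : A →ₗ[R] R :=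
  (TensorProduct.lid R R).toLinearMap ∘ₗ TensorProduct.map f g ∘ₗ ρ

/-- The right action of `A*` on a comodule `(U, θ)`: `u·f = Σ ⟨u', f⟩ u''` for
`θ(u) = Σ u' ⊗ u''`. -/
noncomputable def act {R A U : Type*} [CommRing R] [AddCommGroup A] [Module R A]
    [AddCommGroup U] [Module R U] (θ : U →ₗ[R] A ⊗[R] U) (f : A →ₗ[R] R) : U →ₗ[R] U :=
  (TensorProduct.lid R U).toLinearMap ∘ₗ LinearMap.rTensor U f ∘ₗ θ

/-- Contraction of the first two tensor factors with `f` and `g`. -/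
noncomputable def contr {R A : Type*} (U : Type*) [CommRing R] [AddCommGroup A] [Module R A]
    [AddCommGroup U] [Module R U] (f g : A →ₗ[R] R) : A ⊗[R] (A ⊗[R] U) →ₗ[R] U :=
  (TensorProduct.lid R U).toLinearMap ∘ₗ
    TensorProduct.map f ((TensorProduct.lid R U).toLinearMap ∘ₗ LinearMap.rTensor U g)

theorem contr_leftComm {R A U : Type*} [CommRing R] [AddCommGroup A] [Module R A]
    [AddCommGroup U] [Module R U] (f g : A →ₗ[R] R) :
    contr U f g ∘ₗ (TensorProduct.leftComm R A A U).toLinearMap = contr U g f := by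
  ext a b u
  simp [contr, smul_smul, mul_comm]

theorem contr_lTensor {R A U : Type*} [CommRing R] [AddCommGroup A] [Module R A]
    [AddCommGroup U] [Module R U] (θ : U →ₗ[R] A ⊗[R] U) (f g : A →ₗ[R] R) :
    contr U f g ∘ₗ LinearMap.lTensor A θ =
      act θ g ∘ₗ (TensorProduct.lid R U).toLinearMap ∘ₗ LinearMap.rTensor U f := by
  ext a u
  simp [contr, act]

theorem contr_rTensor {R A U : Type*} [CommRing R] [AddCommGroup A] [Module R A]
    [AddCommGroup U] [Module R U] (ρ : A →ₗ[R] A ⊗[R] A) (f g : A →ₗ[R] R) :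
    contr U f g ∘ₗ (TensorProduct.assoc R A A U).toLinearMap ∘ₗ LinearMap.rTensor U ρ =
      (TensorProduct.lid R U).toLinearMap ∘ₗ LinearMap.rTensor U (starDual ρ f g) := by
  ext a u
  simp only [contr, starDual, TensorProduct.AlgebraTensorModule.curry_apply, LinearMap.comp_apply,
    TensorProduct.curry_apply, LinearMap.coe_restrictScalars, LinearMap.rTensor_tmul,
    LinearEquiv.coe_coe, TensorProduct.lid_tmul]
  induction ρ a with
  | zero => simp
  | tmul x y => simp [smul_smul, mul_comm]
  | add x y hx hy => simp only [TensorProduct.add_tmul, map_add, add_smul, hx, hy]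

theorem contr_tildeComod {R A U : Type*} [CommRing R] [AddCommGroup A] [Module R A]
    [AddCommGroup U] [Module R U] (ρ : A →ₗ[R] A ⊗[R] A) (θ : U →ₗ[R] A ⊗[R] U)
    (f g : A →ₗ[R] R) (u : U) :
    contr U f g (tildeComod ρ θ u) = act θ g (act θ f u) - act θ (starDual ρ f g) u := by
  have h1 := LinearMap.congr_fun (contr_lTensor θ f g) (θ u)
  have h2 := LinearMap.congr_fun (contr_rTensor (U := U) ρ f g) (θ u)
  simp only [LinearMap.comp_apply] at h1 h2
  simp only [tildeComod, LinearMap.sub_apply, LinearMap.comp_apply, map_sub, h1, h2]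
  rfl

/-- for a comodule `(U, θ)` over a pre-Lie coalgebra `(A, ρ)`, the action
`u·f` satisfies `u·[f,g] = (u·f)·g − (u·g)·f`, i.e. it is a right Lie algebra action. -/
theorem stmt_3 {R A U : Type*} [CommRing R] [AddCommGroup A] [Module R A]
    [AddCommGroup U] [Module R U]
    (ρ : A →ₗ[R] A ⊗[R] A)
    (hρ : (TensorProduct.leftComm R A A A).toLinearMap ∘ₗ tilde ρ = tilde ρ)
    (θ : U →ₗ[R] A ⊗[R] U)
    (hθ : (TensorProduct.leftComm R A A U).toLinearMap ∘ₗ tildeComod ρ θ = tildeComod ρ θ) :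
    ∀ (u : U) (f g : A →ₗ[R] R),
      act θ (starDual ρ f g - starDual ρ g f) u =
        act θ g (act θ f u) - act θ f (act θ g u) := by
  intro u f g
  have h := congrArg (contr U f g) (LinearMap.congr_fun hθ u)
  have h3 := LinearMap.congr_fun (contr_leftComm (U := U) f g) (tildeComod ρ θ u)
  simp only [LinearMap.comp_apply] at h h3
  rw [h3, contr_tildeComod, contr_tildeComod] at h
  have h4 : act θ (starDual ρ f g - starDual ρ g f) u =
      act θ (starDual ρ f g) u - act θ (starDual ρ g f) u := by
    simp [act, LinearMap.rTensor_sub]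
  rw [h4]
  rw [sub_eq_sub_iff_add_eq_add] at h ⊢
  rw [add_comm, h]
end

section
/- Let T = ⊕_{m≥0} T^m be a graded associative unital algebra over a commutative ring R with 1 ∈ T^0 and T^m T^n ⊆ T^{m+n}, and let Δ : T → T ⊗ T be a coassociative algebra comultiplication (Δ(1) = 1⊗1 and Δ(ab) = Δ(a)Δ(b)). Assume Δ is left-handed, i.e. Δ(a) − a⊗1 − 1⊗a ∈ T_+ ⊗ T^1 for every a ∈ T^1, where T_+ = ⊕_{m≥1} T^m, and assume T^1 generates T_+ as an algebra. Let π : T → T^1 be the projection and define ρ = (π ⊗ π) ∘ Δ restricted to T^1. Then ρ : T^1 → T^1 ⊗ T^1 is a pre-Lie comultiplication, i.e. P^{1,2} ρ̃ = ρ̃ where ρ̃ = (id ⊗ ρ)ρ − (ρ ⊗ id)ρ. -/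
open scoped TensorProduct

/-- span of the pure tensors with both factors in `P` -/
def auxM {R T : Type*} [CommRing R] [Ring T] [Algebra R T] (P : Submodule R T) :
    Submodule R (T ⊗[R] T) :=
  Submodule.span R {z | ∃ x ∈ P, ∃ y ∈ P, z = x ⊗ₜ[R] y}

theorem auxM_tmul {R T : Type*} [CommRing R] [Ring T] [Algebra R T] {P : Submodule R T}
    {x y : T} (hx : x ∈ P) (hy : y ∈ P) : x ⊗ₜ[R] y ∈ auxM P :=
  Submodule.subset_span ⟨x, hx, y, hy, rfl⟩

theorem auxM_induct {R T : Type*} [CommRing R] [Ring T] [Algebra R T] {P : Submodule R T}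
    (N : Submodule R (T ⊗[R] T)) (f : T ⊗[R] T →ₗ[R] T ⊗[R] T)
    (h : ∀ x ∈ P, ∀ y ∈ P, f (x ⊗ₜ[R] y) ∈ N) : ∀ z ∈ auxM P, f z ∈ N := by
  intro z hz
  have : auxM P ≤ N.comap f := by
    refine Submodule.span_le.2 ?_
    rintro _ ⟨x, hx, y, hy, rfl⟩
    exact h x hx y hy
  exact this hz

/-- The product of two elements that are primitive modulo `P ⊗ P`. -/
theorem aux_mul {R T A : Type*} [CommRing R] [Ring T] [Algebra R T] [AddCommGroup A] [Module R A]
    {P : Submodule R T} (π : T →ₗ[R] A)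
    (hmul : ∀ x ∈ P, ∀ y ∈ P, x * y ∈ P) (hker : ∀ x ∈ P, ∀ y ∈ P, π (x * y) = 0)
    {x y : T} (hx : x ∈ P) (hy : y ∈ P) {z w : T ⊗[R] T} (hz : z ∈ auxM P) (hw : w ∈ auxM P) :
    ∃ v ∈ auxM P ⊓ LinearMap.ker (TensorProduct.map π π),
      (x ⊗ₜ[R] (1 : T) + (1 : T) ⊗ₜ[R] x + z) * (y ⊗ₜ[R] (1 : T) + (1 : T) ⊗ₜ[R] y + w) =
      (x * y) ⊗ₜ[R] (1 : T) + (1 : T) ⊗ₜ[R] (x * y) + (x ⊗ₜ[R] y + y ⊗ₜ[R] x) + v := by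
  set N := auxM P ⊓ LinearMap.ker (TensorProduct.map π π) with hN
  have h1 : x ⊗ₜ[R] (1 : T) * w ∈ N :=
    auxM_induct N (LinearMap.mulLeft R (x ⊗ₜ[R] (1 : T))) (fun a ha b hb => by
      simp [hN, auxM_tmul, hmul, hker, *]) w hw
  have h2 : (1 : T) ⊗ₜ[R] x * w ∈ N :=
    auxM_induct N (LinearMap.mulLeft R ((1 : T) ⊗ₜ[R] x)) (fun a ha b hb => by
      simp [hN, auxM_tmul, hmul, hker, *]) w hw
  have h3 : z * y ⊗ₜ[R] (1 : T) ∈ N :=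
    auxM_induct N (LinearMap.mulRight R (y ⊗ₜ[R] (1 : T))) (fun a ha b hb => by
      simp [hN, auxM_tmul, hmul, hker, *]) z hz
  have h4 : z * (1 : T) ⊗ₜ[R] y ∈ N :=
    auxM_induct N (LinearMap.mulRight R ((1 : T) ⊗ₜ[R] y)) (fun a ha b hb => by
      simp [hN, auxM_tmul, hmul, hker, *]) z hz
  have h5 : z * w ∈ N :=
    auxM_induct N (LinearMap.mulRight R w) (fun a ha b hb => by
      refine auxM_induct N (LinearMap.mulLeft R (a ⊗ₜ[R] b)) (fun c hc d hd => by
        simp [hN, auxM_tmul, hmul, hker, *]) w hw) z hz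
  refine ⟨x ⊗ₜ[R] (1 : T) * w + (1 : T) ⊗ₜ[R] x * w + z * y ⊗ₜ[R] (1 : T)
    + z * (1 : T) ⊗ₜ[R] y + z * w,
    add_mem (add_mem (add_mem (add_mem h1 h2) h3) h4) h5, ?_⟩
  simp only [add_mul, mul_add, Algebra.TensorProduct.tmul_mul_tmul, one_mul, mul_one]
  abel

theorem aux_core {R T A : Type*} [CommRing R] [Ring T] [Algebra R T]
    [AddCommGroup A] [Module R A] (ι : A →ₗ[R] T)
    (Δ : T →ₐ[R] T ⊗[R] T)
    (hcoassoc :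
      (TensorProduct.assoc R T T T).toLinearMap ∘ₗ
          LinearMap.rTensor T Δ.toLinearMap ∘ₗ Δ.toLinearMap =
        LinearMap.lTensor T Δ.toLinearMap ∘ₗ Δ.toLinearMap)
    (Tplus : Submodule R T)
    (hleft : ∀ a : A,
      Δ (ι a) - (ι a) ⊗ₜ[R] (1 : T) - (1 : T) ⊗ₜ[R] (ι a) ∈
        LinearMap.range (TensorProduct.map Tplus.subtype ι))
    (hgen : ∀ x ∈ Tplus, x ∈ NonUnitalAlgebra.adjoin R (Set.range ι))
    (π : T →ₗ[R] A) (hA : ∀ a, ι a ∈ Tplus) (hπ1 : π 1 = 0) (hπa : ∀ a, π (ι a) = a)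
    (hmul : ∀ x ∈ Tplus, ∀ y ∈ Tplus, x * y ∈ Tplus)
    (hker : ∀ x ∈ Tplus, ∀ y ∈ Tplus, π (x * y) = 0)
    (ρ : A →ₗ[R] A ⊗[R] A)
    (hρ : ρ = TensorProduct.map π π ∘ₗ Δ.toLinearMap ∘ₗ ι) :
    (TensorProduct.leftComm R A A A).toLinearMap ∘ₗ tilde ρ = tilde ρ := by
  let L : T →ₗ[R] A ⊗[R] A := TensorProduct.map π π ∘ₗ Δ.toLinearMap - ρ ∘ₗ π
  have hL : ∀ x, L x = TensorProduct.map π π (Δ x) - ρ (π x) := fun x => rfl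
  have hρa : ∀ a, ρ a = TensorProduct.map π π (Δ (ι a)) := fun a => by rw [hρ]; rfl
  have key : ∀ x ∈ NonUnitalAlgebra.adjoin R (Set.range ι),
      x ∈ Tplus ∧ (Δ x - x ⊗ₜ[R] (1 : T) - (1 : T) ⊗ₜ[R] x ∈ auxM Tplus) ∧
        TensorProduct.comm R _ _ (L x) = L x := by
    intro x hx
    induction hx using NonUnitalAlgebra.adjoin_induction with
    | mem x hx =>
      obtain ⟨x, rfl⟩ := hx
      refine ⟨hA x, ?_, ?_⟩
      · obtain ⟨u, hu⟩ := hleft x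
        rw [← hu]
        clear hu
        induction u with
        | zero => simp
        | add u v h1 h2 => rw [map_add]; exact add_mem h1 h2
        | tmul p q => exact auxM_tmul p.2 (hA q)
      · have : L (ι x) = 0 := by
          rw [hL, hπa x, hρa, sub_self]
        rw [this, map_zero]
    | zero => simp
    | add x y _ _ hx hy =>
      refine ⟨add_mem hx.1 hy.1, ?_, by rw [map_add, map_add, hx.2.2, hy.2.2]⟩
      convert add_mem hx.2.1 hy.2.1 using 1
      rw [map_add, TensorProduct.add_tmul, TensorProduct.tmul_add]
      abel
    | smul r x _ hx =>
      refine ⟨Submodule.smul_mem _ _ hx.1, ?_, by rw [map_smul, map_smul, hx.2.2]⟩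
      convert Submodule.smul_mem _ r hx.2.1 using 1
      rw [map_smul, TensorProduct.tmul_smul, ← TensorProduct.smul_tmul', smul_sub, smul_sub]
    | mul x y _ _ hx hy =>
      obtain ⟨v, hv, e⟩ := aux_mul π hmul hker hx.1 hy.1 hx.2.1 hy.2.1
      have e' : Δ (x * y) = (x * y) ⊗ₜ[R] (1 : T) + (1 : T) ⊗ₜ[R] (x * y)
          + (x ⊗ₜ[R] y + y ⊗ₜ[R] x) + v := by
        rw [← e, map_mul]; congr 1 <;> abel
      refine ⟨hmul _ hx.1 _ hy.1, ?_, ?_⟩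
      · rw [e']
        convert add_mem (add_mem (auxM_tmul hx.1 hy.1) (auxM_tmul hy.1 hx.1)) hv.1 using 1
        abel
      · have hv2 : TensorProduct.map π π v = 0 := hv.2
        rw [hL, hker _ hx.1 _ hy.1, e']
        simp only [map_add, TensorProduct.map_tmul, hπ1, hv2, map_zero, TensorProduct.zero_tmul,
          TensorProduct.tmul_zero, TensorProduct.comm_tmul, sub_zero, zero_add, add_zero]
        rw [add_comm]
  have hsym : ∀ x : Tplus, TensorProduct.comm R _ _ (L x) = L x :=
    fun x => (key x (hgen x x.2)).2.2
  have main : ∀ a : A, ∃ u : Tplus ⊗[R] A, tilde ρ a =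
      TensorProduct.assoc R _ _ _ (TensorProduct.map (L ∘ₗ Tplus.subtype) LinearMap.id u) := by
    intro a
    obtain ⟨u, hu⟩ := hleft a
    refine ⟨u, ?_⟩
    have hΔ : Δ (ι a) = (ι a) ⊗ₜ[R] (1 : T) + (1 : T) ⊗ₜ[R] (ι a) +
        TensorProduct.map Tplus.subtype ι u := by
      rw [hu]; abel
    have hr : ρ a = TensorProduct.map (π ∘ₗ Tplus.subtype) LinearMap.id u := by
      rw [hρa, hΔ]
      simp only [map_add, TensorProduct.map_tmul, hπ1, TensorProduct.zero_tmul,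
          TensorProduct.tmul_zero, zero_add]
      rw [← LinearMap.comp_apply, ← TensorProduct.map_comp]
      congr 2
      ext b
      simp [hπa]
    have hco := congrArg (TensorProduct.map π (TensorProduct.map π π))
      (LinearMap.congr_fun hcoassoc (ι a))
    have h1 : TensorProduct.map π (TensorProduct.map π π)
        (LinearMap.lTensor T Δ.toLinearMap (Δ (ι a))) = LinearMap.lTensor _ ρ (ρ a) := by
      rw [hr, hΔ]
      simp only [map_add, LinearMap.lTensor_tmul, TensorProduct.map_tmul, hπ1,
        TensorProduct.zero_tmul, AlgHom.toLinearMap_apply, map_one,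
        Algebra.TensorProduct.one_def, TensorProduct.tmul_zero, zero_add]
      rw [LinearMap.lTensor, LinearMap.lTensor, ← LinearMap.comp_apply, ← LinearMap.comp_apply,
        ← TensorProduct.map_comp, ← TensorProduct.map_comp, ← LinearMap.comp_apply,
        ← TensorProduct.map_comp, LinearMap.comp_id, LinearMap.comp_id, hρ]
      rfl
    have h2 : TensorProduct.map π (TensorProduct.map π π)
        (TensorProduct.assoc R T T T (LinearMap.rTensor T Δ.toLinearMap (Δ (ι a)))) =
        TensorProduct.assoc R _ _ _ (TensorProduct.map
          (TensorProduct.map π π ∘ₗ Δ.toLinearMap ∘ₗ Tplus.subtype) LinearMap.id u) := by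
      have hassoc : ∀ t : (T ⊗[R] T) ⊗[R] T, TensorProduct.map π (TensorProduct.map π π)
          (TensorProduct.assoc R T T T t) = TensorProduct.assoc R _ _ _
            (TensorProduct.map (TensorProduct.map π π) π t) := fun t =>
        TensorProduct.map_map_assoc .. 
      rw [hassoc, hΔ]
      congr 1
      simp only [map_add, LinearMap.rTensor_tmul, TensorProduct.map_tmul, hπ1,
        TensorProduct.zero_tmul, AlgHom.toLinearMap_apply, map_one,
        Algebra.TensorProduct.one_def, TensorProduct.tmul_zero, zero_add]
      rw [LinearMap.rTensor, ← LinearMap.comp_apply, ← LinearMap.comp_apply,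
        ← TensorProduct.map_comp, ← TensorProduct.map_comp]
      congr 2
      ext b
      simp [hπa]
    have h3 : TensorProduct.map π (TensorProduct.map π π)
        (LinearMap.lTensor T Δ.toLinearMap (Δ (ι a))) =
        TensorProduct.map π (TensorProduct.map π π)
        (TensorProduct.assoc R T T T (LinearMap.rTensor T Δ.toLinearMap (Δ (ι a)))) := hco.symm
    have h4 : tilde ρ a = LinearMap.lTensor _ ρ (ρ a) -
      TensorProduct.assoc R _ _ _ (LinearMap.rTensor _ ρ (ρ a)) := rfl
    rw [h4, ← h1, h3, h2, hr, ← map_sub]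
    congr 1
    clear_value L
    clear hr hΔ hu h1 h2 h3 h4 hco
    induction u with
    | zero => simp
    | add u v h1 h2 => rw [map_add, map_add, map_add, map_add, ← h1, ← h2]; abel
    | tmul p q => simp [hL, TensorProduct.sub_tmul]
  ext1 a
  obtain ⟨u, hu⟩ := main a
  rw [LinearMap.comp_apply, hu]
  have hcl : ∀ t : (A ⊗[R] A) ⊗[R] A,
      TensorProduct.leftComm R _ _ _ (TensorProduct.assoc R _ _ _ t) =
      TensorProduct.assoc R _ _ _ (TensorProduct.map
        (TensorProduct.comm R A A).toLinearMap LinearMap.id t) := by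
    intro t
    have : (TensorProduct.leftComm R A A A).toLinearMap ∘ₗ
        (TensorProduct.assoc R _ _ _).toLinearMap = (TensorProduct.assoc R _ _ _).toLinearMap ∘ₗ
        (TensorProduct.map (TensorProduct.comm R A A).toLinearMap LinearMap.id) := by
      apply TensorProduct.ext_threefold
      intro x y z
      simp
    exact LinearMap.congr_fun this t
  refine (hcl _).trans ?_
  congr 1
  rw [← LinearMap.comp_apply, ← TensorProduct.map_comp]
  congr 2
  ext1 x
  exact hsym x

/-- let `T = ⊕ T^m` be a graded algebra with a coassociative algebra
comultiplication `Δ` that is left-handed, and suppose `T^1` generates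
`T_+ = ⊕_{m≥1} T^m`.  Then the leading term `ρ = (π ⊗ π) ∘ Δ|_{T^1}` is a pre-Lie
comultiplication on `T^1`. -/
theorem stmt_4 {R T : Type*} [CommRing R] [Ring T] [Algebra R T]
    (𝒜 : ℕ → Submodule R T) [GradedAlgebra 𝒜]
    (Δ : T →ₐ[R] T ⊗[R] T)
    (hcoassoc :
      (TensorProduct.assoc R T T T).toLinearMap ∘ₗ
          LinearMap.rTensor T Δ.toLinearMap ∘ₗ Δ.toLinearMap =
        LinearMap.lTensor T Δ.toLinearMap ∘ₗ Δ.toLinearMap)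
    (Tplus : Submodule R T) (hTplus : Tplus = ⨆ m, ⨆ _ : 1 ≤ m, 𝒜 m)
    (hleft : ∀ a : ↥(𝒜 1),
      Δ (a : T) - (a : T) ⊗ₜ[R] (1 : T) - (1 : T) ⊗ₜ[R] (a : T) ∈
        LinearMap.range (TensorProduct.map Tplus.subtype (𝒜 1).subtype))
    (hgen : ∀ x ∈ Tplus, x ∈ NonUnitalAlgebra.adjoin R (𝒜 1 : Set T))
    (π : T →ₗ[R] ↥(𝒜 1)) (hπ : ∀ x : T, π x = DirectSum.decompose 𝒜 x 1)
    (ρ : ↥(𝒜 1) →ₗ[R] ↥(𝒜 1) ⊗[R] ↥(𝒜 1))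
    (hρ : ρ = TensorProduct.map π π ∘ₗ Δ.toLinearMap ∘ₗ (𝒜 1).subtype) :
    (TensorProduct.leftComm R ↥(𝒜 1) ↥(𝒜 1) ↥(𝒜 1)).toLinearMap ∘ₗ tilde ρ = tilde ρ := by
  have hle : ∀ m, 1 ≤ m → 𝒜 m ≤ Tplus := fun m hm => by
    rw [hTplus]; exact le_iSup₂_of_le m hm le_rfl
  have hA : ∀ a : 𝒜 1, (a : T) ∈ Tplus := fun a => hle 1 le_rfl a.2
  have hπ1 : π 1 = 0 := by
    rw [hπ]
    apply Subtype.ext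
    exact DirectSum.decompose_of_mem_ne 𝒜 (SetLike.GradedOne.one_mem) (by norm_num)
  have hπa : ∀ a : 𝒜 1, π a = a := fun a => by
    rw [hπ]
    apply Subtype.ext
    exact DirectSum.decompose_of_mem_same 𝒜 a.2
  have hmm : Tplus * Tplus ≤ Tplus ⊓ LinearMap.ker π := by
    conv_lhs => rw [hTplus]
    simp only [Submodule.iSup_mul, Submodule.mul_iSup]
    refine iSup_le fun m => iSup_le fun n => iSup_le fun hn => iSup_le fun hm => ?_
    refine Submodule.mul_le.2 fun x hx y hy => ?_
    have h := SetLike.GradedMul.mul_mem hx hy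
    refine ⟨hle _ (by omega) h, ?_⟩
    refine LinearMap.mem_ker.2 ?_
    rw [hπ]
    apply Subtype.ext
    exact DirectSum.decompose_of_mem_ne 𝒜 h (by simp only [] at *; omega)
  have hmul : ∀ x ∈ Tplus, ∀ y ∈ Tplus, x * y ∈ Tplus := fun x hx y hy =>
    (hmm (Submodule.mul_mem_mul hx hy)).1
  have hker : ∀ x ∈ Tplus, ∀ y ∈ Tplus, π (x * y) = 0 := fun x hx y hy =>
    (hmm (Submodule.mul_mem_mul hx hy)).2
  have h := aux_core (𝒜 1).subtype Δ hcoassoc Tplus hleft (by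
      intro x hx
      have := hgen x hx
      have e : Set.range (𝒜 1).subtype = (𝒜 1 : Set T) := by simp
      rw [e]; exact this) π hA hπ1 hπa hmul hker ρ hρ
  exact h
end

section
/- Let T = ⊕_{m≥0} T^m be a graded bialgebra over a commutative ring R with a left-handed coassociative algebra comultiplication Δ such that T^1 generates T_+ = ⊕_{m≥1} T^m, and let ρ = (π ⊗ π) ∘ Δ|_{T^1} be the induced pre-Lie comultiplication on T^1, where π : T → T^1 is the projection. Let (U, Θ) be a left comodule over (T, Δ), i.e. Θ : U → T ⊗ U is R-linear with (Δ ⊗ id_U)Θ = (id_T ⊗ Θ)Θ and Θ(u) − 1⊗u ∈ T_+ ⊗ U for all u ∈ U. Then θ := (π ⊗ id_U) ∘ Θ : U → T^1 ⊗ U makes (U, θ) a comodule over the pre-Lie coalgebra (T^1, ρ), i.e. θ̃ := (id ⊗ θ)θ − (ρ ⊗ id)θ satisfies P^{1,2} θ̃ = θ̃. -/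
open scoped TensorProduct

theorem mul_mem_V {R T : Type*} [CommRing R] [Ring T] [Algebra R T]
    (𝒜 : ℕ → Submodule R T) [GradedAlgebra 𝒜] (x y : T)
    (hx : x ∈ ⨆ m, ⨆ _ : 1 ≤ m, 𝒜 m) (hy : y ∈ ⨆ m, ⨆ _ : 1 ≤ m, 𝒜 m) :
    x * y ∈ ⨆ m, ⨆ _ : 2 ≤ m, 𝒜 m := by
  have h := Submodule.mul_mem_mul hx hy
  suffices hle : (⨆ m, ⨆ _ : 1 ≤ m, 𝒜 m) * (⨆ m, ⨆ _ : 1 ≤ m, 𝒜 m) ≤ ⨆ m, ⨆ _ : 2 ≤ m, 𝒜 m from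
    hle h
  simp only [Submodule.iSup_mul, Submodule.mul_iSup]
  refine iSup_le fun i => iSup_le fun hi => iSup_le fun j => iSup_le fun hj => ?_
  refine le_trans ?_ (le_iSup_of_le (j + i) (le_iSup_of_le (by omega) le_rfl))
  rw [Submodule.mul_le]
  intro a ha b hb
  exact SetLike.mul_mem_graded ha hb

/-- The core symmetric statement, in a form only using the properties of `P = T_+` needed. -/
theorem core_sym {R T A : Type*} [CommRing R] [Ring T] [Algebra R T]
    [AddCommGroup A] [Module R A]
    (Δ : T →ₐ[R] T ⊗[R] T) (P : Submodule R T) (ι : A →ₗ[R] T) (π : T →ₗ[R] A)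
    (hιP : ∀ a, ι a ∈ P) (hπι : ∀ a, π (ι a) = a)
    (hPP : ∀ x ∈ P, ∀ y ∈ P, x * y ∈ P) (hπP : ∀ x ∈ P, ∀ y ∈ P, π (x * y) = 0)
    (hπ1 : π 1 = 0)
    (hleft : ∀ a : A, Δ (ι a) - (ι a) ⊗ₜ[R] (1 : T) - (1 : T) ⊗ₜ[R] (ι a) ∈
        LinearMap.range (TensorProduct.map P.subtype ι))
    (x : T) (hx : x ∈ NonUnitalAlgebra.adjoin R (Set.range ι)) :
    TensorProduct.comm R A A (TensorProduct.map π π (Δ (x - ι (π x)))) =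
      TensorProduct.map π π (Δ (x - ι (π x))) := by
  let W : Submodule R (T ⊗[R] T) :=
    Submodule.span R {t | ∃ a ∈ P, ∃ b ∈ P, a ⊗ₜ[R] b = t}
  have hW : ∀ a ∈ P, ∀ b ∈ P, a ⊗ₜ[R] b ∈ W := fun a ha b hb =>
    Submodule.subset_span ⟨a, ha, b, hb, rfl⟩
  let N : Submodule R (T ⊗[R] T) := W ⊓ LinearMap.ker (TensorProduct.map π π)
  have hN : ∀ a ∈ P, ∀ b ∈ P, (π a = 0 ∨ π b = 0) → a ⊗ₜ[R] b ∈ N := by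
    intro a ha b hb h
    refine ⟨hW a ha b hb, ?_⟩
    rw [SetLike.mem_coe, LinearMap.mem_ker, TensorProduct.map_tmul]
    rcases h with h | h <;> simp [h]
  have h1 : ∀ y ∈ P, ∀ w ∈ W, (y ⊗ₜ[R] (1 : T)) * w ∈ N := by
    intro y hy w hw
    induction hw using Submodule.span_induction with
    | mem t ht =>
      obtain ⟨a, ha, b, hb, rfl⟩ := ht
      rw [Algebra.TensorProduct.tmul_mul_tmul, one_mul]
      exact hN _ (hPP _ hy _ ha) _ hb (Or.inl (hπP _ hy _ ha))
    | zero => simp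
    | add s t _ _ hs ht => rw [mul_add]; exact N.add_mem hs ht
    | smul r t _ ht => rw [mul_smul_comm]; exact N.smul_mem r ht
  have h2 : ∀ y ∈ P, ∀ w ∈ W, ((1 : T) ⊗ₜ[R] y) * w ∈ N := by
    intro y hy w hw
    induction hw using Submodule.span_induction with
    | mem t ht =>
      obtain ⟨a, ha, b, hb, rfl⟩ := ht
      rw [Algebra.TensorProduct.tmul_mul_tmul, one_mul]
      exact hN _ ha _ (hPP _ hy _ hb) (Or.inr (hπP _ hy _ hb))
    | zero => simp
    | add s t _ _ hs ht => rw [mul_add]; exact N.add_mem hs ht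
    | smul r t _ ht => rw [mul_smul_comm]; exact N.smul_mem r ht
  have h3 : ∀ y ∈ P, ∀ w ∈ W, w * (y ⊗ₜ[R] (1 : T)) ∈ N := by
    intro y hy w hw
    induction hw using Submodule.span_induction with
    | mem t ht =>
      obtain ⟨a, ha, b, hb, rfl⟩ := ht
      rw [Algebra.TensorProduct.tmul_mul_tmul, mul_one]
      exact hN _ (hPP _ ha _ hy) _ hb (Or.inl (hπP _ ha _ hy))
    | zero => simp
    | add s t _ _ hs ht => rw [add_mul]; exact N.add_mem hs ht
    | smul r t _ ht => rw [smul_mul_assoc]; exact N.smul_mem r ht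
  have h4 : ∀ y ∈ P, ∀ w ∈ W, w * ((1 : T) ⊗ₜ[R] y) ∈ N := by
    intro y hy w hw
    induction hw using Submodule.span_induction with
    | mem t ht =>
      obtain ⟨a, ha, b, hb, rfl⟩ := ht
      rw [Algebra.TensorProduct.tmul_mul_tmul, mul_one]
      exact hN _ ha _ (hPP _ hb _ hy) (Or.inr (hπP _ hb _ hy))
    | zero => simp
    | add s t _ _ hs ht => rw [add_mul]; exact N.add_mem hs ht
    | smul r t _ ht => rw [smul_mul_assoc]; exact N.smul_mem r ht
  have h5 : ∀ w ∈ W, ∀ w' ∈ W, w * w' ∈ N := by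
    intro w hw w' hw'
    induction hw using Submodule.span_induction with
    | mem t ht =>
      obtain ⟨a, ha, b, hb, rfl⟩ := ht
      have : a ⊗ₜ[R] b = (a ⊗ₜ[R] (1 : T)) * ((1 : T) ⊗ₜ[R] b) := by
        rw [Algebra.TensorProduct.tmul_mul_tmul, mul_one, one_mul]
      rw [this, mul_assoc]
      exact h1 a ha _ (h2 b hb _ hw').1
    | zero => simp
    | add s t _ _ hs ht => rw [add_mul]; exact N.add_mem hs ht
    | smul r t _ ht => rw [smul_mul_assoc]; exact N.smul_mem r ht
  have key : x ∈ P ∧ (∃ w ∈ W, Δ x = x ⊗ₜ[R] (1 : T) + (1 : T) ⊗ₜ[R] x + w) ∧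
      TensorProduct.comm R A A (TensorProduct.map π π (Δ (x - ι (π x)))) =
      TensorProduct.map π π (Δ (x - ι (π x))) := by
    induction hx using NonUnitalAlgebra.adjoin_induction with
    | mem x hx =>
      obtain ⟨a, rfl⟩ := hx
      refine ⟨hιP a, ⟨_, ?_, (add_sub_cancel _ _).symm⟩, by simp [hπι]⟩
      obtain ⟨t, ht⟩ := hleft a
      rw [← sub_sub, ← ht]
      clear ht
      induction t using TensorProduct.induction_on with
      | zero => simp
      | tmul p b => exact hW _ p.2 _ (hιP b)
      | add s t hs ht => rw [map_add]; exact W.add_mem hs ht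
    | zero => exact ⟨P.zero_mem, ⟨0, W.zero_mem, by simp⟩, by simp⟩
    | add y z _ _ hy hz =>
      obtain ⟨hy, ⟨w, hw, ew⟩, sy⟩ := hy
      obtain ⟨hz, ⟨w', hw', ew'⟩, sz⟩ := hz
      refine ⟨P.add_mem hy hz, ⟨w + w', W.add_mem hw hw', ?_⟩, ?_⟩
      · rw [map_add, ew, ew', TensorProduct.add_tmul, TensorProduct.tmul_add]; abel
      · have : y + z - ι (π (y + z)) = (y - ι (π y)) + (z - ι (π z)) := by
          rw [map_add, map_add]; abel
        rw [this, map_add, map_add, map_add, sy, sz]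
    | smul r y _ hy =>
      obtain ⟨hy, ⟨w, hw, ew⟩, sy⟩ := hy
      refine ⟨P.smul_mem r hy, ⟨r • w, W.smul_mem r hw, ?_⟩, ?_⟩
      · rw [map_smul, ew, smul_add, smul_add, TensorProduct.smul_tmul', TensorProduct.tmul_smul]
      · have : r • y - ι (π (r • y)) = r • (y - ι (π y)) := by
          rw [map_smul, map_smul, smul_sub]
        rw [this, map_smul, map_smul, map_smul, sy]
    | mul y z _ _ hy hz =>
      obtain ⟨hy, ⟨w, hw, ew⟩, -⟩ := hy
      obtain ⟨hz, ⟨w', hw', ew'⟩, -⟩ := hz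
      obtain ⟨n, hn, e⟩ : ∃ n ∈ N, Δ (y * z) = (y * z) ⊗ₜ[R] (1 : T) + (1 : T) ⊗ₜ[R] (y * z) +
          (y ⊗ₜ[R] z + z ⊗ₜ[R] y + n) := by
        refine ⟨(y ⊗ₜ[R] (1 : T)) * w' + ((1 : T) ⊗ₜ[R] y) * w' + w * (z ⊗ₜ[R] (1 : T)) +
          w * ((1 : T) ⊗ₜ[R] z) + w * w', ?_, ?_⟩
        · exact N.add_mem (N.add_mem (N.add_mem (N.add_mem (h1 y hy _ hw') (h2 y hy _ hw'))
            (h3 z hz _ hw)) (h4 z hz _ hw)) (h5 _ hw _ hw')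
        · rw [map_mul, ew, ew']
          simp only [add_mul, mul_add, Algebra.TensorProduct.tmul_mul_tmul, mul_one, one_mul]
          abel
      refine ⟨hPP _ hy _ hz, ⟨_, W.add_mem (W.add_mem (hW _ hy _ hz) (hW _ hz _ hy)) hn.1, e⟩, ?_⟩
      have hn2 : TensorProduct.map π π n = 0 := hn.2
      rw [hπP _ hy _ hz, map_zero, sub_zero, e]
      simp only [map_add, hn2, TensorProduct.map_tmul, hπ1, hπP _ hy _ hz,
        TensorProduct.comm_tmul, TensorProduct.zero_tmul, map_zero, zero_add, add_zero]
      rw [add_comm]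
  exact key.2.2

theorem tilde_eq {R T U A : Type*} [CommRing R] [Ring T] [Algebra R T]
    [AddCommGroup U] [Module R U] [AddCommGroup A] [Module R A]
    (Δ : T →ₐ[R] T ⊗[R] T) (ι : A →ₗ[R] T) (π : T →ₗ[R] A) (ρ : A →ₗ[R] A ⊗[R] A)
    (hρ : ρ = TensorProduct.map π π ∘ₗ Δ.toLinearMap ∘ₗ ι)
    (Θ : U →ₗ[R] T ⊗[R] U)
    (hΘcoassoc :
      (TensorProduct.assoc R T T U).toLinearMap ∘ₗ
          LinearMap.rTensor U Δ.toLinearMap ∘ₗ Θ =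
        LinearMap.lTensor T Θ ∘ₗ Θ)
    (θ : U →ₗ[R] A ⊗[R] U) (hθ : θ = LinearMap.rTensor U π ∘ₗ Θ) :
    tildeComod ρ θ = (TensorProduct.assoc R A A U).toLinearMap ∘ₗ LinearMap.rTensor U
      (TensorProduct.map π π ∘ₗ Δ.toLinearMap ∘ₗ (LinearMap.id - ι ∘ₗ π)) ∘ₗ Θ := by
  have e1 : LinearMap.lTensor A θ ∘ₗ θ =
      (TensorProduct.assoc R A A U).toLinearMap ∘ₗ
        LinearMap.rTensor U (TensorProduct.map π π ∘ₗ Δ.toLinearMap) ∘ₗ Θ := by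
    have a1 : LinearMap.lTensor A θ ∘ₗ θ =
        TensorProduct.map π (LinearMap.rTensor U π) ∘ₗ (LinearMap.lTensor T Θ ∘ₗ Θ) := by
      rw [hθ, ← LinearMap.comp_assoc, ← LinearMap.comp_assoc]
      congr 1
      ext t u
      simp
    have a2 : TensorProduct.map π (LinearMap.rTensor U π) ∘ₗ
        (TensorProduct.assoc R T T U).toLinearMap =
        (TensorProduct.assoc R A A U).toLinearMap ∘ₗ
          LinearMap.rTensor U (TensorProduct.map π π) := by
      ext a b u
      simp
    rw [a1, ← hΘcoassoc, ← LinearMap.comp_assoc, a2, LinearMap.rTensor_comp]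
    rfl
  have e2 : LinearMap.rTensor U ρ ∘ₗ θ = LinearMap.rTensor U (ρ ∘ₗ π) ∘ₗ Θ := by
    rw [hθ, LinearMap.rTensor_comp]; rfl
  have e3 : TensorProduct.map π π ∘ₗ Δ.toLinearMap ∘ₗ (LinearMap.id - ι ∘ₗ π) = TensorProduct.map π π ∘ₗ Δ.toLinearMap - ρ ∘ₗ π := by
    rw [hρ]
    simp only [LinearMap.comp_sub, LinearMap.comp_id, LinearMap.comp_assoc]
  rw [tildeComod, e1, e2, e3, LinearMap.rTensor_sub, LinearMap.sub_comp, LinearMap.comp_sub]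

/-- let `(T = ⊕ T^m, Δ)` be a left-handed graded bialgebra such that `T^1`
generates `T_+`, with leading term `ρ` on `T^1`, and let `(U, Θ)` be a left comodule
over `(T, Δ)`.  Then `θ = (π ⊗ id_U) ∘ Θ` makes `U` a comodule over the pre-Lie
coalgebra `(T^1, ρ)`, i.e. `P^{1,2} θ̃ = θ̃`. -/
theorem stmt_6 {R T U : Type*} [CommRing R] [Ring T] [Algebra R T]
    [AddCommGroup U] [Module R U]
    (𝒜 : ℕ → Submodule R T) [GradedAlgebra 𝒜]
    (Δ : T →ₐ[R] T ⊗[R] T)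
    (hcoassoc :
      (TensorProduct.assoc R T T T).toLinearMap ∘ₗ
          LinearMap.rTensor T Δ.toLinearMap ∘ₗ Δ.toLinearMap =
        LinearMap.lTensor T Δ.toLinearMap ∘ₗ Δ.toLinearMap)
    (Tplus : Submodule R T) (hTplus : Tplus = ⨆ m, ⨆ _ : 1 ≤ m, 𝒜 m)
    (hleft : ∀ a : ↥(𝒜 1),
      Δ (a : T) - (a : T) ⊗ₜ[R] (1 : T) - (1 : T) ⊗ₜ[R] (a : T) ∈
        LinearMap.range (TensorProduct.map Tplus.subtype (𝒜 1).subtype))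
    (hgen : ∀ x ∈ Tplus, x ∈ NonUnitalAlgebra.adjoin R (𝒜 1 : Set T))
    (π : T →ₗ[R] ↥(𝒜 1)) (hπ : ∀ x : T, π x = DirectSum.decompose 𝒜 x 1)
    (ρ : ↥(𝒜 1) →ₗ[R] ↥(𝒜 1) ⊗[R] ↥(𝒜 1))
    (hρ : ρ = TensorProduct.map π π ∘ₗ Δ.toLinearMap ∘ₗ (𝒜 1).subtype)
    (Θ : U →ₗ[R] T ⊗[R] U)
    (hΘcoassoc :
      (TensorProduct.assoc R T T U).toLinearMap ∘ₗ
          LinearMap.rTensor U Δ.toLinearMap ∘ₗ Θ =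
        LinearMap.lTensor T Θ ∘ₗ Θ)
    (hΘleft : ∀ u : U,
      Θ u - (1 : T) ⊗ₜ[R] u ∈ LinearMap.range (LinearMap.rTensor U Tplus.subtype))
    (θ : U →ₗ[R] ↥(𝒜 1) ⊗[R] U) (hθ : θ = LinearMap.rTensor U π ∘ₗ Θ) :
    (TensorProduct.leftComm R ↥(𝒜 1) ↥(𝒜 1) U).toLinearMap ∘ₗ tildeComod ρ θ =
      tildeComod ρ θ := by
  subst hTplus
  have hdec : ∀ m, m ≠ 1 → ∀ x ∈ 𝒜 m, π x = 0 := by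
    intro m hm x hx
    rw [hπ]
    exact Subtype.ext (DirectSum.decompose_of_mem_ne 𝒜 hx hm)
  have hV : (⨆ m, ⨆ _ : 2 ≤ m, 𝒜 m) ≤ LinearMap.ker π :=
    iSup_le fun m => iSup_le fun hm x hx => hdec m (by omega) x hx
  have hπ1 : π 1 = 0 := hdec 0 (by omega) 1 SetLike.GradedOne.one_mem
  have hVP : (⨆ m, ⨆ _ : 2 ≤ m, 𝒜 m) ≤ ⨆ m, ⨆ _ : 1 ≤ m, 𝒜 m :=
    iSup_le fun m => iSup_le fun hm => le_iSup_of_le m (le_iSup_of_le (by omega) le_rfl)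
  have h1P : 𝒜 1 ≤ ⨆ m, ⨆ _ : 1 ≤ m, 𝒜 m := le_iSup_of_le 1 (le_iSup_of_le le_rfl le_rfl)
  let F : T →ₗ[R] ↥(𝒜 1) ⊗[R] ↥(𝒜 1) :=
    TensorProduct.map π π ∘ₗ Δ.toLinearMap ∘ₗ (LinearMap.id - (𝒜 1).subtype ∘ₗ π)
  have hF : ∀ x ∈ ⨆ m, ⨆ _ : 1 ≤ m, 𝒜 m,
      TensorProduct.comm R ↥(𝒜 1) ↥(𝒜 1) (F x) = F x := by
    intro x hx
    refine core_sym Δ (⨆ m, ⨆ _ : 1 ≤ m, 𝒜 m) (𝒜 1).subtype π (fun a => h1P a.2) ?_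
      (fun x hx y hy => hVP (mul_mem_V 𝒜 x y hx hy))
      (fun x hx y hy => hV (mul_mem_V 𝒜 x y hx hy)) hπ1 hleft x ?_
    · intro a
      rw [hπ]
      exact Subtype.ext (DirectSum.decompose_of_mem_same 𝒜 a.2)
    · have : Set.range (𝒜 1).subtype = (𝒜 1 : Set T) := by simp
      rw [this]
      exact hgen x hx
  have hF1 : F 1 = 0 := by
    simp [F, hπ1, Algebra.TensorProduct.one_def]
  have htilde : tildeComod ρ θ =
      (TensorProduct.assoc R ↥(𝒜 1) ↥(𝒜 1) U).toLinearMap ∘ₗ LinearMap.rTensor U F ∘ₗ Θ := 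
    tilde_eq Δ (𝒜 1).subtype π ρ hρ Θ hΘcoassoc θ hθ
  have hlc : (TensorProduct.leftComm R ↥(𝒜 1) ↥(𝒜 1) U).toLinearMap ∘ₗ
      (TensorProduct.assoc R ↥(𝒜 1) ↥(𝒜 1) U).toLinearMap =
      (TensorProduct.assoc R ↥(𝒜 1) ↥(𝒜 1) U).toLinearMap ∘ₗ
        LinearMap.rTensor U (TensorProduct.comm R ↥(𝒜 1) ↥(𝒜 1)).toLinearMap := by
    ext a b u
    simp
  rw [htilde, ← LinearMap.comp_assoc, hlc, LinearMap.comp_assoc]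
  congr 1
  rw [← LinearMap.comp_assoc, ← LinearMap.rTensor_comp]
  ext u
  obtain ⟨t, ht⟩ := hΘleft u
  have hΘ : Θ u = (1 : T) ⊗ₜ[R] u +
      LinearMap.rTensor U (⨆ m, ⨆ _ : 1 ≤ m, 𝒜 m : Submodule R T).subtype t := by
    rw [ht]; abel
  rw [LinearMap.comp_apply, LinearMap.comp_apply, hΘ, map_add, map_add]
  congr 1
  · simp [hF1]
  · rw [← LinearMap.comp_apply, ← LinearMap.comp_apply, ← LinearMap.rTensor_comp,
      ← LinearMap.rTensor_comp]
    congr 2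
    ext1 p
    exact hF p p.2
end

section
/- Let 𝒜 be an alphabet, let L be a stable set of nonempty words in 𝒜, and let V be the free R-module on the set of nonempty words in 𝒜. Define ρ_L : V → V ⊗ V on a word w of length m ≥ 1 by ρ_L(w) = Σ_{(i,j)≺w} w_{i,j} ⊗ w_{1,i} w_{j,m+1}, the sum over all simple cuts (i,j) of w. Then ρ_L is a pre-Lie comultiplication on V: P^{1,2} ρ̃_L = ρ̃_L, where ρ̃_L = (id ⊗ ρ_L)ρ_L − (ρ_L ⊗ id)ρ_L. -/
open scoped TensorProduct Classical

/-- The free `R`-module on the set of nonempty words in the alphabet `𝒜`. -/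
abbrev WordModule (R 𝒜 : Type*) [CommRing R] : Type _ :=
  {w : List 𝒜 // w ≠ []} →₀ R

/-- The basis vector of a nonempty word (and `0` on the empty word, which never occurs
in the formulas below). -/
noncomputable def wv (R : Type*) {𝒜 : Type*} [CommRing R] (w : List 𝒜) :
    WordModule R 𝒜 :=
  if h : w = [] then 0 else Finsupp.single ⟨w, h⟩ 1

/-- Stability of a set of nonempty words (0-based indices: the factor `w_{i,j}` of the
paper is `(w.drop i).take (j - i)`, and `w_{1,i} w_{j,m+1}` is `w.take i ++ w.drop j`). -/
def IsStable {𝒜 : Type*} (L : Set (List 𝒜)) : Prop :=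
  ∀ (w : List 𝒜) (i j : ℕ), i < j → j ≤ w.length → ¬(i = 0 ∧ j = w.length) →
    (w.drop i).take (j - i) ∈ L → (w ∈ L ↔ w.take i ++ w.drop j ∈ L)

/-- The simple cuts of a word `w`: pairs `(i, j)`, `0 ≤ i < j ≤ w.length`,
`(i,j) ≠ (0, w.length)`, whose factor belongs to `L`. -/
noncomputable def simpleCuts {𝒜 : Type*} (L : Set (List 𝒜)) (w : List 𝒜) :
    Finset (ℕ × ℕ) :=
  (Finset.range (w.length + 1) ×ˢ Finset.range (w.length + 1)).filter
    (fun p => p.1 < p.2 ∧ ¬(p.1 = 0 ∧ p.2 = w.length) ∧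
      (w.drop p.1).take (p.2 - p.1) ∈ L)

/-- The factor of a word. -/
def fac {𝒜 : Type*} (w : List 𝒜) (i j : ℕ) : List 𝒜 := (w.drop i).take (j - i)

/-- The word with a factor removed. -/
def del {𝒜 : Type*} (w : List 𝒜) (i j : ℕ) : List 𝒜 := w.take i ++ w.drop j

theorem fac_length {𝒜 : Type*} (w : List 𝒜) (i j : ℕ) (hj : j ≤ w.length) :
    (fac w i j).length = j - i := by
  simp only [fac, List.length_take, List.length_drop]; omega

theorem del_length {𝒜 : Type*} (w : List 𝒜) (i j : ℕ) (hi : i ≤ j) (hj : j ≤ w.length) :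
    (del w i j).length = w.length - (j - i) := by
  simp only [del, List.length_append, List.length_take, List.length_drop]; omega

theorem fac_get {𝒜 : Type*} (w : List 𝒜) (i j n : ℕ) :
    (fac w i j)[n]? = if n < j - i then w[i + n]? else none := by
  simp only [fac, List.getElem?_take, List.getElem?_drop]

theorem del_get {𝒜 : Type*} (w : List 𝒜) (i j n : ℕ) (hi : i ≤ j) (hj : j ≤ w.length) :
    (del w i j)[n]? = if n < i then w[n]? else w[n + (j - i)]? := by
  have h : min i w.length = i := by omega
  simp only [del, List.getElem?_append, List.getElem?_take, List.getElem?_drop,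
    List.length_take, h]
  split_ifs
  · rfl
  · congr 1; omega

theorem fac_fac {𝒜 : Type*} (w : List 𝒜) (K M a b : ℕ) (hb : b ≤ M - K) :
    fac (fac w K M) a b = fac w (K + a) (K + b) := by
  apply List.ext_getElem?
  intro n
  simp only [fac_get]
  split_ifs <;> first | rfl | omega | (congr 1; omega)

theorem fac_del_mid {𝒜 : Type*} (w : List 𝒜) (i j k l : ℕ) (hij : i < j) (hj : j ≤ w.length)
    (hk : k ≤ i) (hl : i ≤ l) (hlw : l + (j - i) ≤ w.length) :
    fac (del w i j) k l = del (fac w k (l + (j - i))) (i - k) (j - k) := by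
  apply List.ext_getElem?
  intro n
  rw [del_get _ _ _ _ (by omega) (by rw [fac_length _ _ _ hlw]; omega)]
  simp only [fac_get, del_get w i j _ hij.le hj]
  split_ifs <;> first | rfl | omega | (congr 1; omega)

theorem del_del_mid {𝒜 : Type*} (w : List 𝒜) (i j k l : ℕ) (hij : i < j) (hj : j ≤ w.length)
    (hk : k ≤ i) (hl : i ≤ l) (hlw : l + (j - i) ≤ w.length) :
    del (del w i j) k l = del w k (l + (j - i)) := by
  apply List.ext_getElem?
  intro n
  rw [del_get _ _ _ _ (by omega) (by rw [del_length _ _ _ hij.le hj]; omega),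
    del_get _ _ _ _ (by omega) hlw]
  simp only [del_get w i j _ hij.le hj]
  split_ifs <;> first | rfl | omega | (congr 1; omega)

theorem fac_del_left {𝒜 : Type*} (w : List 𝒜) (i j k l : ℕ) (hij : i < j) (hj : j ≤ w.length)
    (hl : l ≤ i) : fac (del w i j) k l = fac w k l := by
  apply List.ext_getElem?
  intro n
  simp only [fac_get, del_get w i j _ hij.le hj]
  split_ifs <;> first | rfl | omega | (congr 1; omega)

theorem fac_del_right {𝒜 : Type*} (w : List 𝒜) (i j k l : ℕ) (hij : i < j) (hj : j ≤ w.length)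
    (hk : i ≤ k) : fac (del w i j) k l = fac w (k + (j - i)) (l + (j - i)) := by
  apply List.ext_getElem?
  intro n
  simp only [fac_get, del_get w i j _ hij.le hj]
  split_ifs <;> first | rfl | omega | (congr 1; omega)

theorem del_del_comm {𝒜 : Type*} (w : List 𝒜) (i j k l : ℕ) (hij : i < j) (hj : j ≤ w.length)
    (hkl : k < l) (hl : l ≤ i) :
    del (del w i j) k l = del (del w k l) (i - (l - k)) (j - (l - k)) := by
  apply List.ext_getElem?
  intro n
  rw [del_get (del w i j) k l _ (by omega) (by rw [del_length _ _ _ hij.le hj]; omega),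
    del_get (del w k l) _ _ _ (by omega) (by rw [del_length _ _ _ hkl.le (by omega)]; omega)]
  simp only [del_get w i j _ hij.le hj, del_get w k l _ hkl.le (by omega)]
  split_ifs <;> first | rfl | omega | (congr 1; omega)

theorem mem_cuts {𝒜 : Type*} (L : Set (List 𝒜)) (w : List 𝒜) (p : ℕ × ℕ) :
    p ∈ simpleCuts L w ↔
      p.1 < p.2 ∧ p.2 ≤ w.length ∧ ¬(p.1 = 0 ∧ p.2 = w.length) ∧ fac w p.1 p.2 ∈ L := by
  simp only [simpleCuts, Finset.mem_filter, Finset.mem_product, Finset.mem_range, fac]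
  constructor
  · rintro ⟨⟨h1, h2⟩, h3, h4, h5⟩; exact ⟨h3, by omega, h4, h5⟩
  · rintro ⟨h1, h2, h3, h4⟩; exact ⟨⟨by omega, by omega⟩, h1, h3, h4⟩

/-- Iterated cuts, the second one in the remaining word. -/
noncomputable def cutsA {𝒜 : Type*} (L : Set (List 𝒜)) (w : List 𝒜) :
    Finset (Σ _ : ℕ × ℕ, ℕ × ℕ) :=
  (simpleCuts L w).sigma (fun p => simpleCuts L (del w p.1 p.2))

/-- Iterated cuts, the second one in the factor. -/
noncomputable def cutsB {𝒜 : Type*} (L : Set (List 𝒜)) (w : List 𝒜) :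
    Finset (Σ _ : ℕ × ℕ, ℕ × ℕ) :=
  (simpleCuts L w).sigma (fun p => simpleCuts L (fac w p.1 p.2))

theorem mem_cutsA {𝒜 : Type*} (L : Set (List 𝒜)) (w : List 𝒜) (i j k l : ℕ) :
    (⟨(i, j), (k, l)⟩ : Σ _ : ℕ × ℕ, ℕ × ℕ) ∈ cutsA L w ↔
      (i < j ∧ j ≤ w.length ∧ ¬(i = 0 ∧ j = w.length) ∧ fac w i j ∈ L) ∧
      (k < l ∧ l + (j - i) ≤ w.length ∧ ¬(k = 0 ∧ l + (j - i) = w.length) ∧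
        fac (del w i j) k l ∈ L) := by
  simp only [cutsA, Finset.mem_sigma, mem_cuts]
  refine and_congr_right ?_
  rintro ⟨h1, h2, -, -⟩
  rw [del_length w i j h1.le h2]
  refine and_congr_right fun h => ?_
  refine and_congr (by omega) (and_congr (by omega) Iff.rfl)

theorem mem_cutsB {𝒜 : Type*} (L : Set (List 𝒜)) (w : List 𝒜) (i j k l : ℕ) :
    (⟨(i, j), (k, l)⟩ : Σ _ : ℕ × ℕ, ℕ × ℕ) ∈ cutsB L w ↔
      (i < j ∧ j ≤ w.length ∧ ¬(i = 0 ∧ j = w.length) ∧ fac w i j ∈ L) ∧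
      (k < l ∧ l ≤ j - i ∧ ¬(k = 0 ∧ l = j - i) ∧ fac w (i + k) (i + l) ∈ L) := by
  simp only [cutsB, Finset.mem_sigma, mem_cuts]
  refine and_congr_right ?_
  rintro ⟨h1, h2, -, -⟩
  rw [fac_length w i j h2]
  refine and_congr_right fun h => ?_
  refine and_congr_right fun h' => ?_
  rw [fac_fac _ _ _ _ _ h']

theorem sig_ext {a b c d a' b' c' d' : ℕ} (h1 : a = a') (h2 : b = b') (h3 : c = c')
    (h4 : d = d') : (⟨(a, b), (c, d)⟩ : Σ _ : ℕ × ℕ, ℕ × ℕ) = ⟨(a', b'), (c', d')⟩ := by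
  subst h1 h2 h3 h4; rfl

/-- The two cuts touch or are nested. -/
def Touch (q : Σ _ : ℕ × ℕ, ℕ × ℕ) : Prop := q.2.1 ≤ q.1.1 ∧ q.1.1 ≤ q.2.2

theorem stable_mid {𝒜 : Type*} {L : Set (List 𝒜)} (hL : IsStable L) (w : List 𝒜) (i j k l : ℕ)
    (hij : i < j) (hj : j ≤ w.length) (hk : k ≤ i) (hl : i ≤ l) (hkl : k < l)
    (hlw : l + (j - i) ≤ w.length) (h : fac w i j ∈ L) :
    fac w k (l + (j - i)) ∈ L ↔ fac (del w i j) k l ∈ L := by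
  rw [fac_del_mid w i j k l hij hj hk hl hlw]
  refine hL _ (i - k) (j - k) (by omega) ?_ ?_ ?_
  · rw [fac_length _ _ _ hlw]; omega
  · rw [fac_length _ _ _ hlw]; omega
  · change fac (fac w k (l + (j - i))) (i - k) (j - k) ∈ L
    rw [fac_fac _ _ _ _ _ (by omega)]
    rwa [show k + (i - k) = i by omega, show k + (j - k) = j by omega]

theorem sum_touch {𝒜 M : Type*} [AddCommMonoid M] {L : Set (List 𝒜)} (hL : IsStable L)
    (w : List 𝒜) (f : List 𝒜 → List 𝒜 → List 𝒜 → M) :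
    ∑ q ∈ (cutsA L w).filter Touch, f (fac w q.1.1 q.1.2)
      (fac (del w q.1.1 q.1.2) q.2.1 q.2.2) (del (del w q.1.1 q.1.2) q.2.1 q.2.2) =
    ∑ q ∈ cutsB L w, f (fac (fac w q.1.1 q.1.2) q.2.1 q.2.2)
      (del (fac w q.1.1 q.1.2) q.2.1 q.2.2) (del w q.1.1 q.1.2) := by
  refine Finset.sum_bij'
    (fun q _ => ⟨(q.2.1, q.2.2 + (q.1.2 - q.1.1)), (q.1.1 - q.2.1, q.1.2 - q.2.1)⟩)
    (fun q _ => ⟨(q.1.1 + q.2.1, q.1.1 + q.2.2), (q.1.1, q.1.2 - (q.2.2 - q.2.1))⟩)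
    ?_ ?_ ?_ ?_ ?_
  · rintro ⟨⟨i, j⟩, ⟨k, l⟩⟩ h
    rw [Finset.mem_filter, mem_cutsA] at h
    obtain ⟨⟨⟨h1, h2, h3, h4⟩, h5, h6, h7, h8⟩, h9, h10⟩ := h
    dsimp only at *
    rw [mem_cutsB]
    refine ⟨⟨by omega, h6, h7, ?_⟩, by omega, by omega, by omega, ?_⟩
    · exact (stable_mid hL w i j k l h1 h2 h9 h10 h5 h6 h4).2 h8
    · rwa [show k + (i - k) = i by omega, show k + (j - k) = j by omega]
  · rintro ⟨⟨K, M⟩, ⟨a, b⟩⟩ h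
    rw [mem_cutsB] at h
    obtain ⟨⟨h1, h2, h3, h4⟩, h5, h6, h7, h8⟩ := h
    rw [Finset.mem_filter, mem_cutsA]
    dsimp only [Touch]
    refine ⟨⟨⟨by omega, by omega, by omega, h8⟩, by omega, by omega, by omega, ?_⟩,
      by omega, by omega⟩
    refine (stable_mid hL w _ _ _ _ (by omega) (by omega) (by omega) (by omega) (by omega)
      (by omega) h8).1 ?_
    rwa [show M - (b - a) + (K + b - (K + a)) = M by omega]
  · rintro ⟨⟨i, j⟩, ⟨k, l⟩⟩ h
    rw [Finset.mem_filter, mem_cutsA] at h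
    obtain ⟨⟨⟨h1, h2, h3, h4⟩, h5, h6, h7, h8⟩, h9, h10⟩ := h
    dsimp only at *
    apply sig_ext <;> (try dsimp only) <;> omega
  · rintro ⟨⟨K, M⟩, ⟨a, b⟩⟩ h
    rw [mem_cutsB] at h
    obtain ⟨⟨h1, h2, h3, h4⟩, h5, h6, h7, h8⟩ := h
    apply sig_ext <;> (try dsimp only) <;> omega
  · rintro ⟨⟨i, j⟩, ⟨k, l⟩⟩ h
    rw [Finset.mem_filter, mem_cutsA] at h
    obtain ⟨⟨⟨h1, h2, h3, h4⟩, h5, h6, h7, h8⟩, h9, h10⟩ := h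
    dsimp only at *
    rw [fac_fac _ _ _ _ _ (by omega), ← fac_del_mid w i j k l h1 h2 h9 h10 h6,
      del_del_mid w i j k l h1 h2 h9 h10 h6,
      show k + (i - k) = i by omega, show k + (j - k) = j by omega]

/-- Exchange of two separated cuts. -/
def swapCut (q : Σ _ : ℕ × ℕ, ℕ × ℕ) : Σ _ : ℕ × ℕ, ℕ × ℕ :=
  if q.2.2 < q.1.1 then
    ⟨(q.2.1, q.2.2), (q.1.1 - (q.2.2 - q.2.1), q.1.2 - (q.2.2 - q.2.1))⟩
  else ⟨(q.2.1 + (q.1.2 - q.1.1), q.2.2 + (q.1.2 - q.1.1)), (q.1.1, q.1.2)⟩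

theorem swap_spec {𝒜 : Type*} (L : Set (List 𝒜)) (w : List 𝒜) (q : Σ _ : ℕ × ℕ, ℕ × ℕ)
    (h : q ∈ (cutsA L w).filter (fun q => ¬ Touch q)) :
    swapCut q ∈ (cutsA L w).filter (fun q => ¬ Touch q) ∧ swapCut (swapCut q) = q ∧
    fac w (swapCut q).1.1 (swapCut q).1.2 = fac (del w q.1.1 q.1.2) q.2.1 q.2.2 ∧
    fac (del w (swapCut q).1.1 (swapCut q).1.2) (swapCut q).2.1 (swapCut q).2.2 =
      fac w q.1.1 q.1.2 ∧
    del (del w (swapCut q).1.1 (swapCut q).1.2) (swapCut q).2.1 (swapCut q).2.2 =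
      del (del w q.1.1 q.1.2) q.2.1 q.2.2 := by
  obtain ⟨⟨i, j⟩, ⟨k, l⟩⟩ := q
  rw [Finset.mem_filter, mem_cutsA] at h
  obtain ⟨⟨⟨h1, h2, h3, h4⟩, h5, h6, h7, h8⟩, h9⟩ := h
  dsimp only [Touch] at h9
  by_cases hc : l < i
  · have e : swapCut ⟨(i, j), (k, l)⟩ = ⟨(k, l), (i - (l - k), j - (l - k))⟩ := by
      simp only [swapCut, hc, if_true]
    have e2 : swapCut ⟨(k, l), (i - (l - k), j - (l - k))⟩ = ⟨(i, j), (k, l)⟩ := by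
      have : ¬ (j - (l - k) < k) := by omega
      simp only [swapCut, this, if_false]
      apply sig_ext <;> omega
    have f1 : fac (del w i j) k l = fac w k l := fac_del_left w i j k l h1 h2 hc.le
    have f2 : fac (del w k l) (i - (l - k)) (j - (l - k)) = fac w i j := by
      rw [fac_del_right w k l _ _ h5 (by omega) (by omega),
        show i - (l - k) + (l - k) = i by omega, show j - (l - k) + (l - k) = j by omega]
    rw [e, e2, Finset.mem_filter, mem_cutsA]
    dsimp only [Touch]
    refine ⟨⟨⟨⟨h5, by omega, by omega, f1 ▸ h8⟩, by omega, by omega, by omega, f2 ▸ h4⟩,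
      by omega⟩, rfl, f1.symm, f2, ?_⟩
    exact (del_del_comm w i j k l h1 h2 h5 hc.le).symm
  · have hk : i < k := by omega
    have e : swapCut ⟨(i, j), (k, l)⟩ = ⟨(k + (j - i), l + (j - i)), (i, j)⟩ := by
      simp only [swapCut, hc, if_false]
    have e2 : swapCut ⟨(k + (j - i), l + (j - i)), (i, j)⟩ = ⟨(i, j), (k, l)⟩ := by
      have : j < k + (j - i) := by omega
      simp only [swapCut, this, if_true]
      apply sig_ext <;> omega
    have f1 : fac (del w i j) k l = fac w (k + (j - i)) (l + (j - i)) :=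
      fac_del_right w i j k l h1 h2 hk.le
    have f2 : fac (del w (k + (j - i)) (l + (j - i))) i j = fac w i j :=
      fac_del_left w _ _ i j (by omega) h6 (by omega)
    rw [e, e2, Finset.mem_filter, mem_cutsA]
    dsimp only [Touch]
    refine ⟨⟨⟨⟨by omega, by omega, by omega, f1 ▸ h8⟩, by omega, by omega, by omega,
      f2.symm ▸ h4⟩, by omega⟩, rfl, f1.symm, f2, ?_⟩
    rw [del_del_comm w _ _ i j (by omega) h6 h1 (by omega),
      show k + (j - i) - (j - i) = k by omega, show l + (j - i) - (j - i) = l by omega]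

theorem sum_swap {𝒜 M : Type*} [AddCommMonoid M] (L : Set (List 𝒜))
    (w : List 𝒜) (f : List 𝒜 → List 𝒜 → List 𝒜 → M) :
    ∑ q ∈ (cutsA L w).filter (fun q => ¬ Touch q), f (fac (del w q.1.1 q.1.2) q.2.1 q.2.2)
      (fac w q.1.1 q.1.2) (del (del w q.1.1 q.1.2) q.2.1 q.2.2) =
    ∑ q ∈ (cutsA L w).filter (fun q => ¬ Touch q), f (fac w q.1.1 q.1.2)
      (fac (del w q.1.1 q.1.2) q.2.1 q.2.2) (del (del w q.1.1 q.1.2) q.2.1 q.2.2) := by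
  refine Finset.sum_bij' (fun q _ => swapCut q) (fun q _ => swapCut q)
    (fun q h => (swap_spec L w q h).1) (fun q h => (swap_spec L w q h).1)
    (fun q h => (swap_spec L w q h).2.1) (fun q h => (swap_spec L w q h).2.1) ?_
  intro q h
  obtain ⟨-, -, h1, h2, h3⟩ := swap_spec L w q h
  rw [h1, h2, h3]

theorem rho_wv {R 𝒜 : Type*} [CommRing R] (L : Set (List 𝒜))
    (ρ : WordModule R 𝒜 →ₗ[R] WordModule R 𝒜 ⊗[R] WordModule R 𝒜)
    (hρ : ∀ (w : List 𝒜) (hw : w ≠ []),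
      ρ (Finsupp.single ⟨w, hw⟩ 1) =
        ∑ p ∈ simpleCuts L w,
          wv R ((w.drop p.1).take (p.2 - p.1)) ⊗ₜ[R] wv R (w.take p.1 ++ w.drop p.2))
    (w : List 𝒜) :
    ρ (wv R w) = ∑ p ∈ simpleCuts L w, wv R (fac w p.1 p.2) ⊗ₜ[R] wv R (del w p.1 p.2) := by
  by_cases h : w = []
  · have he : simpleCuts L w = ∅ := by
      apply Finset.eq_empty_of_forall_notMem
      intro p hp
      rw [mem_cuts, h, List.length_nil] at hp
      omega
    rw [he, Finset.sum_empty, wv, dif_pos h, map_zero]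
  · rw [wv, dif_neg h]
    exact hρ w h

theorem tilde_wv {R 𝒜 : Type*} [CommRing R] (L : Set (List 𝒜)) (hL : IsStable L)
    (ρ : WordModule R 𝒜 →ₗ[R] WordModule R 𝒜 ⊗[R] WordModule R 𝒜)
    (hρ : ∀ w : List 𝒜, ρ (wv R w) =
      ∑ p ∈ simpleCuts L w, wv R (fac w p.1 p.2) ⊗ₜ[R] wv R (del w p.1 p.2))
    (w : List 𝒜) :
    tilde ρ (wv R w) = ∑ q ∈ (cutsA L w).filter (fun q => ¬ Touch q),
      wv R (fac w q.1.1 q.1.2) ⊗ₜ[R] (wv R (fac (del w q.1.1 q.1.2) q.2.1 q.2.2) ⊗ₜ[R]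
        wv R (del (del w q.1.1 q.1.2) q.2.1 q.2.2)) := by
  have hA : LinearMap.lTensor (WordModule R 𝒜) ρ (ρ (wv R w)) = ∑ q ∈ cutsA L w,
      wv R (fac w q.1.1 q.1.2) ⊗ₜ[R] (wv R (fac (del w q.1.1 q.1.2) q.2.1 q.2.2) ⊗ₜ[R]
        wv R (del (del w q.1.1 q.1.2) q.2.1 q.2.2)) := by
    rw [hρ, map_sum, cutsA, Finset.sum_sigma]
    refine Finset.sum_congr rfl fun p _ => ?_
    rw [LinearMap.lTensor_tmul, hρ, TensorProduct.tmul_sum]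
  have hB : TensorProduct.assoc R (WordModule R 𝒜) (WordModule R 𝒜) (WordModule R 𝒜)
      (LinearMap.rTensor (WordModule R 𝒜) ρ (ρ (wv R w))) = ∑ q ∈ cutsB L w,
      wv R (fac (fac w q.1.1 q.1.2) q.2.1 q.2.2) ⊗ₜ[R]
        (wv R (del (fac w q.1.1 q.1.2) q.2.1 q.2.2) ⊗ₜ[R] wv R (del w q.1.1 q.1.2)) := by
    rw [hρ, map_sum, map_sum, cutsB, Finset.sum_sigma]
    refine Finset.sum_congr rfl fun p _ => ?_
    rw [LinearMap.rTensor_tmul, hρ, TensorProduct.sum_tmul, map_sum]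
    refine Finset.sum_congr rfl fun p _ => ?_
    rw [TensorProduct.assoc_tmul]
  have hT := sum_touch hL w (fun a b c => wv R a ⊗ₜ[R] (wv R b ⊗ₜ[R] wv R c))
  change LinearMap.lTensor (WordModule R 𝒜) ρ (ρ (wv R w)) -
    TensorProduct.assoc R (WordModule R 𝒜) (WordModule R 𝒜) (WordModule R 𝒜)
      (LinearMap.rTensor (WordModule R 𝒜) ρ (ρ (wv R w))) = _
  rw [hA, hB, ← hT, sub_eq_iff_eq_add, add_comm]
  exact (Finset.sum_filter_add_sum_filter_not _ _ _).symm

/-- for a stable set `L` of nonempty words, the comultiplication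
`ρ_L(w) = Σ_{(i,j)≺w} w_{i,j} ⊗ w_{1,i} w_{j,m+1}` is pre-Lie: `P^{1,2} ρ̃_L = ρ̃_L`. -/
theorem stmt_7 {R 𝒜 : Type*} [CommRing R]
    (L : Set (List 𝒜)) (hL0 : ∀ w ∈ L, w ≠ []) (hL : IsStable L)
    (ρ : WordModule R 𝒜 →ₗ[R] WordModule R 𝒜 ⊗[R] WordModule R 𝒜)
    (hρ : ∀ (w : List 𝒜) (hw : w ≠ []),
      ρ (Finsupp.single ⟨w, hw⟩ 1) =
        ∑ p ∈ simpleCuts L w,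
          wv R ((w.drop p.1).take (p.2 - p.1)) ⊗ₜ[R] wv R (w.take p.1 ++ w.drop p.2)) :
    (TensorProduct.leftComm R (WordModule R 𝒜) (WordModule R 𝒜)
        (WordModule R 𝒜)).toLinearMap ∘ₗ tilde ρ = tilde ρ := by
  have hρ' := rho_wv L ρ hρ
  apply Finsupp.lhom_ext'
  rintro ⟨w, hw⟩
  apply LinearMap.ext_ring
  have e : (Finsupp.single ⟨w, hw⟩ 1 : WordModule R 𝒜) = wv R w := by
    rw [wv, dif_neg hw]
  simp only [LinearMap.comp_apply, Finsupp.lsingle_apply, LinearEquiv.coe_coe]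
  rw [e, tilde_wv L hL ρ hρ' w, map_sum]
  simp only [TensorProduct.leftComm_tmul]
  exact sum_swap L w (fun a b c => wv R a ⊗ₜ[R] (wv R b ⊗ₜ[R] wv R c))
end

section
/- Let 𝒜 be an alphabet, μ : 𝒜 × 𝒜 → R a map, and W the free R-module on the set of all words in 𝒜 (including the empty word). Define ρ_μ : W → W ⊗ W on a word w of length m by ρ_μ(w) = Σ_{a † w} μ(w|_a) · l_a(w) ⊗ r_a(w), the sum over all simple inscriptions a in w. Then ρ_μ is a pre-Lie comultiplication on W: P^{1,2} ρ̃_μ = ρ̃_μ, where ρ̃_μ = (id ⊗ ρ_μ)ρ_μ − (ρ_μ ⊗ id)ρ_μ. -/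
open scoped TensorProduct Classical

/-- The free `R`-module on the set of all words (including the empty word). -/
abbrev AllWordModule (R 𝒜 : Type*) [CommRing R] : Type _ := List 𝒜 →₀ R

/-- The coefficient `μ(w|_a) = μ(w(i), w(j))` (0-based positions; `0` out of range,
which never occurs in the formulas below). -/
def muCoeff {R 𝒜 : Type*} [CommRing R] (μ : 𝒜 → 𝒜 → R) (w : List 𝒜) (i j : ℕ) : R :=
  match w[i]?, w[j]? with
  | some a, some b => μ a b
  | _, _ => 0

/-- Simple inscriptions in a word `w`: pairs of positions `0 ≤ i < j < w.length`. -/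
def simpleInscriptions {𝒜 : Type*} (w : List 𝒜) : Finset (ℕ × ℕ) :=
  (Finset.range w.length ×ˢ Finset.range w.length).filter (fun p => p.1 < p.2)

/-- The inner word of an inscription. -/
def inW {𝒜 : Type*} (w : List 𝒜) (p : ℕ × ℕ) : List 𝒜 := (w.drop (p.1 + 1)).take (p.2 - p.1 - 1)

/-- The outer word of an inscription. -/
def outW {𝒜 : Type*} (w : List 𝒜) (p : ℕ × ℕ) : List 𝒜 := w.take p.1 ++ w.drop (p.2 + 1)

theorem mem_simp {𝒜 : Type*} (w : List 𝒜) (p : ℕ × ℕ) :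
    p ∈ simpleInscriptions w ↔ p.1 < p.2 ∧ p.2 < w.length := by
  simp only [simpleInscriptions, Finset.mem_filter, Finset.mem_product, Finset.mem_range]
  omega

theorem getElem?_inW {𝒜 : Type*} (w : List 𝒜) (p : ℕ × ℕ) (n : ℕ) :
    (inW w p)[n]? = if n < p.2 - p.1 - 1 then w[p.1 + 1 + n]? else none := by
  simp only [inW, List.getElem?_take, List.getElem?_drop]

theorem getElem?_outW {𝒜 : Type*} (w : List 𝒜) (p : ℕ × ℕ) (h : p.1 ≤ w.length) (n : ℕ) :
    (outW w p)[n]? = if n < p.1 then w[n]? else w[p.2 + 1 + (n - p.1)]? := by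
  simp only [outW, List.getElem?_append, List.getElem?_take, List.getElem?_drop,
    List.length_take, min_eq_left h]
  split_ifs <;> rfl

theorem length_inW {𝒜 : Type*} (w : List 𝒜) (p : ℕ × ℕ) (h : p.1 < p.2) (hh : p.2 < w.length) :
    (inW w p).length = p.2 - p.1 - 1 := by
  simp only [inW, List.length_take, List.length_drop]; omega

theorem length_outW {𝒜 : Type*} (w : List 𝒜) (p : ℕ × ℕ) (h : p.1 < p.2) (hh : p.2 < w.length) :
    (outW w p).length = w.length - (p.2 - p.1 + 1) := by
  simp only [outW, List.length_append, List.length_take, List.length_drop]; omega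

theorem muCoeff_congr {R 𝒜 : Type*} [CommRing R] (μ : 𝒜 → 𝒜 → R) (w v : List 𝒜) (i j k l : ℕ)
    (h : w[i]? = v[k]?) (hh : w[j]? = v[l]?) : muCoeff μ w i j = muCoeff μ v k l := by
  simp only [muCoeff, h, hh]

/-- Pairs of successive inscriptions, the second in the outer word. -/
def outPairs {𝒜 : Type*} (w : List 𝒜) : Finset ((_ : ℕ × ℕ) × (ℕ × ℕ)) :=
  (simpleInscriptions w).sigma (fun p => simpleInscriptions (outW w p))

/-- Pairs of successive inscriptions, the second in the inner word. -/
def inPairs {𝒜 : Type*} (w : List 𝒜) : Finset ((_ : ℕ × ℕ) × (ℕ × ℕ)) :=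
  (simpleInscriptions w).sigma (fun p => simpleInscriptions (inW w p))

theorem mem_outPairs {𝒜 : Type*} (w : List 𝒜) (x : (_ : ℕ × ℕ) × (ℕ × ℕ)) :
    x ∈ outPairs w ↔ x.1.1 < x.1.2 ∧ x.1.2 < w.length ∧ x.2.1 < x.2.2 ∧
      x.2.2 < w.length - (x.1.2 - x.1.1 + 1) := by
  simp only [outPairs, Finset.mem_sigma, mem_simp]
  constructor
  · rintro ⟨⟨h1, h2⟩, h3, h4⟩
    rw [length_outW w _ h1 h2] at h4
    exact ⟨h1, h2, h3, h4⟩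
  · rintro ⟨h1, h2, h3, h4⟩
    rw [length_outW w _ h1 h2]
    exact ⟨⟨h1, h2⟩, h3, h4⟩

theorem mem_inPairs {𝒜 : Type*} (w : List 𝒜) (x : (_ : ℕ × ℕ) × (ℕ × ℕ)) :
    x ∈ inPairs w ↔ x.1.1 < x.1.2 ∧ x.1.2 < w.length ∧ x.2.1 < x.2.2 ∧
      x.2.2 < x.1.2 - x.1.1 - 1 := by
  simp only [inPairs, Finset.mem_sigma, mem_simp]
  constructor
  · rintro ⟨⟨h1, h2⟩, h3, h4⟩
    rw [length_inW w _ h1 h2] at h4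
    exact ⟨h1, h2, h3, h4⟩
  · rintro ⟨h1, h2, h3, h4⟩
    rw [length_inW w _ h1 h2]
    exact ⟨⟨h1, h2⟩, h3, h4⟩

/-- A summand: a coefficient times a triple tensor. -/
noncomputable def trip {R 𝒜 : Type*} [CommRing R] (c d : R) (x y z : List 𝒜) :
    AllWordModule R 𝒜 ⊗[R] (AllWordModule R 𝒜 ⊗[R] AllWordModule R 𝒜) :=
  (c * d) • (Finsupp.single x (1 : R) ⊗ₜ[R]
    (Finsupp.single y (1 : R) ⊗ₜ[R] Finsupp.single z (1 : R)))

/-- Summand of `(id ⊗ ρ)ρ`. -/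
noncomputable def outTerm {R 𝒜 : Type*} [CommRing R] (μ : 𝒜 → 𝒜 → R) (w : List 𝒜)
    (x : (_ : ℕ × ℕ) × (ℕ × ℕ)) :
    AllWordModule R 𝒜 ⊗[R] (AllWordModule R 𝒜 ⊗[R] AllWordModule R 𝒜) :=
  trip (muCoeff μ w x.1.1 x.1.2) (muCoeff μ (outW w x.1) x.2.1 x.2.2)
    (inW w x.1) (inW (outW w x.1) x.2) (outW (outW w x.1) x.2)

/-- Summand of `(id ⊗ ρ)ρ` with the first two factors exchanged. -/
noncomputable def outTermSwap {R 𝒜 : Type*} [CommRing R] (μ : 𝒜 → 𝒜 → R) (w : List 𝒜)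
    (x : (_ : ℕ × ℕ) × (ℕ × ℕ)) :
    AllWordModule R 𝒜 ⊗[R] (AllWordModule R 𝒜 ⊗[R] AllWordModule R 𝒜) :=
  trip (muCoeff μ w x.1.1 x.1.2) (muCoeff μ (outW w x.1) x.2.1 x.2.2)
    (inW (outW w x.1) x.2) (inW w x.1) (outW (outW w x.1) x.2)

/-- Summand of `(ρ ⊗ id)ρ`. -/
noncomputable def inTerm {R 𝒜 : Type*} [CommRing R] (μ : 𝒜 → 𝒜 → R) (w : List 𝒜)
    (x : (_ : ℕ × ℕ) × (ℕ × ℕ)) :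
    AllWordModule R 𝒜 ⊗[R] (AllWordModule R 𝒜 ⊗[R] AllWordModule R 𝒜) :=
  trip (muCoeff μ w x.1.1 x.1.2) (muCoeff μ (inW w x.1) x.2.1 x.2.2)
    (inW (inW w x.1) x.2) (outW (inW w x.1) x.2) (outW w x.1)

theorem trip_congr {R 𝒜 : Type*} [CommRing R] {c d c2 d2 : R} {x y z x2 y2 z2 : List 𝒜}
    (hc : c = d2) (hd : d = c2) (hx : x = x2) (hy : y = y2) (hz : z = z2) :
    trip c d x y z = trip c2 d2 x2 y2 z2 := by
  subst hc hd hx hy hz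
  rw [trip, trip, mul_comm]

theorem nested_term {R 𝒜 : Type*} [CommRing R] (μ : 𝒜 → 𝒜 → R) (w : List 𝒜) (i j k l : ℕ)
    (h1 : k < i) (h2 : i < j) (h3 : j < w.length) (h4 : i ≤ l)
    (h5 : l < w.length - (j - i + 1)) :
    outTerm μ w ⟨(i, j), (k, l)⟩ =
      inTerm μ w ⟨(k, l + (j - i + 1)), (i - k - 1, j - k - 1)⟩ := by
  have ho := getElem?_outW w (i, j) (by simp only; omega)
  have hi := getElem?_inW w (k, l + (j - i + 1))
  have lo := length_outW w (i, j) h2 h3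
  have li := length_inW w (k, l + (j - i + 1)) (by simp only; omega) (by simp only; omega)
  simp only at ho hi lo li
  apply trip_congr
  · apply muCoeff_congr <;> simp only [hi] <;> rw [if_pos (by omega)] <;> congr 1 <;> omega
  · apply muCoeff_congr <;> simp only [ho]
    · rw [if_pos (by omega)]
    · rw [if_neg (by omega)]; congr 1; omega
  · apply List.ext_getElem?; intro n
    simp only [getElem?_inW]
    split_ifs <;> first | rfl | omega | (congr 1; omega)
  · apply List.ext_getElem?; intro n
    rw [getElem?_outW _ _ (by simp only; omega)]
    simp only [getElem?_inW, ho]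
    split_ifs <;> first | rfl | omega | (congr 1; omega)
  · apply List.ext_getElem?; intro n
    rw [getElem?_outW (outW w (i, j)) (k, l) (by simp only; omega),
      getElem?_outW w (k, l + (j - i + 1)) (by simp only; omega)]
    simp only [ho]
    split_ifs <;> first | rfl | omega | (congr 1; omega)

theorem disjoint_term {R 𝒜 : Type*} [CommRing R] (μ : 𝒜 → 𝒜 → R) (w : List 𝒜) (i j k l : ℕ)
    (h1 : k < l) (h2 : l < i) (h3 : i < j) (h4 : j < w.length) :
    outTermSwap μ w ⟨(i, j), (k, l)⟩ =
      outTerm μ w ⟨(k, l), (i - (l - k + 1), j - (l - k + 1))⟩ := by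
  have ho := getElem?_outW w (i, j) (by simp only; omega)
  have hi := getElem?_outW w (k, l) (by simp only; omega)
  have lo := length_outW w (i, j) h3 h4
  have li := length_outW w (k, l) h1 (by simp only; omega)
  simp only at ho hi lo li
  apply trip_congr
  · apply muCoeff_congr <;> simp only [hi] <;> rw [if_neg (by omega)] <;> congr 1 <;> omega
  · apply muCoeff_congr <;> simp only [ho] <;> rw [if_pos (by omega)]
  · apply List.ext_getElem?; intro n
    simp only [getElem?_inW, ho]
    split_ifs <;> first | rfl | omega | (congr 1; omega)
  · apply List.ext_getElem?; intro n
    simp only [getElem?_inW, hi]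
    split_ifs <;> first | rfl | omega | (congr 1; omega)
  · apply List.ext_getElem?; intro n
    rw [getElem?_outW (outW w (i, j)) (k, l) (by simp only; omega),
      getElem?_outW (outW w (k, l)) (i - (l - k + 1), j - (l - k + 1)) (by simp only; omega)]
    simp only [ho, hi]
    split_ifs <;> first | rfl | omega | (congr 1; omega)

theorem disjoint_term_symm {R 𝒜 : Type*} [CommRing R] (μ : 𝒜 → 𝒜 → R) (w : List 𝒜) (i j k l : ℕ)
    (h1 : k < l) (h2 : l < i) (h3 : i < j) (h4 : j < w.length) :
    outTerm μ w ⟨(i, j), (k, l)⟩ =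
      outTermSwap μ w ⟨(k, l), (i - (l - k + 1), j - (l - k + 1))⟩ := by
  have h := congrArg (TensorProduct.leftComm R (AllWordModule R 𝒜) (AllWordModule R 𝒜)
        (AllWordModule R 𝒜)) (disjoint_term μ w i j k l h1 h2 h3 h4)
  simpa only [outTerm, outTermSwap, trip, map_smul, TensorProduct.leftComm_tmul] using h

theorem sum_nested {R 𝒜 : Type*} [CommRing R] (μ : 𝒜 → 𝒜 → R) (w : List 𝒜) :
    ∑ x ∈ outPairs w with (x.2.1 < x.1.1 ∧ x.1.1 ≤ x.2.2), outTerm μ w x =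
      ∑ x ∈ inPairs w, inTerm μ w x := by
  refine Finset.sum_bij'
    (fun x _ => ⟨(x.2.1, x.2.2 + (x.1.2 - x.1.1 + 1)),
      (x.1.1 - x.2.1 - 1, x.1.2 - x.2.1 - 1)⟩)
    (fun x _ => ⟨(x.1.1 + 1 + x.2.1, x.1.1 + 1 + x.2.2),
      (x.1.1, x.1.2 - (x.2.2 - x.2.1 + 1))⟩) ?_ ?_ ?_ ?_ ?_
  · rintro ⟨⟨i, j⟩, ⟨k, l⟩⟩ h
    simp only [Finset.mem_filter, mem_outPairs, mem_inPairs] at h ⊢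
    omega
  · rintro ⟨⟨i, j⟩, ⟨k, l⟩⟩ h
    simp only [Finset.mem_filter, mem_outPairs, mem_inPairs] at h ⊢
    omega
  · rintro ⟨⟨i, j⟩, ⟨k, l⟩⟩ h
    simp only [Finset.mem_filter, mem_outPairs] at h
    refine Sigma.ext (Prod.ext ?_ ?_) (heq_of_eq (Prod.ext ?_ ?_)) <;> simp only <;> omega
  · rintro ⟨⟨i, j⟩, ⟨k, l⟩⟩ h
    simp only [mem_inPairs] at h
    refine Sigma.ext (Prod.ext ?_ ?_) (heq_of_eq (Prod.ext ?_ ?_)) <;> simp only <;> omega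
  · rintro ⟨⟨i, j⟩, ⟨k, l⟩⟩ h
    simp only [Finset.mem_filter, mem_outPairs] at h
    exact nested_term μ w i j k l h.2.1 h.1.1 h.1.2.1 h.2.2 h.1.2.2.2

theorem sum_disjoint {R 𝒜 : Type*} [CommRing R] (w : List 𝒜)
    (f g : (_ : ℕ × ℕ) × (ℕ × ℕ) →
      AllWordModule R 𝒜 ⊗[R] (AllWordModule R 𝒜 ⊗[R] AllWordModule R 𝒜))
    (hfg : ∀ i j k l : ℕ, k < l → l < i → i < j → j < w.length →
      f ⟨(i, j), (k, l)⟩ = g ⟨(k, l), (i - (l - k + 1), j - (l - k + 1))⟩) :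
    ∑ x ∈ outPairs w with x.2.2 < x.1.1, f x =
      ∑ x ∈ outPairs w with x.1.1 ≤ x.2.1, g x := by
  refine Finset.sum_bij'
    (fun x _ => ⟨(x.2.1, x.2.2),
      (x.1.1 - (x.2.2 - x.2.1 + 1), x.1.2 - (x.2.2 - x.2.1 + 1))⟩)
    (fun x _ => ⟨(x.2.1 + (x.1.2 - x.1.1 + 1), x.2.2 + (x.1.2 - x.1.1 + 1)),
      (x.1.1, x.1.2)⟩) ?_ ?_ ?_ ?_ ?_
  · rintro ⟨⟨i, j⟩, ⟨k, l⟩⟩ h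
    simp only [Finset.mem_filter, mem_outPairs] at h ⊢
    omega
  · rintro ⟨⟨i, j⟩, ⟨k, l⟩⟩ h
    simp only [Finset.mem_filter, mem_outPairs] at h ⊢
    omega
  · rintro ⟨⟨i, j⟩, ⟨k, l⟩⟩ h
    simp only [Finset.mem_filter, mem_outPairs] at h
    refine Sigma.ext (Prod.ext ?_ ?_) (heq_of_eq (Prod.ext ?_ ?_)) <;> simp only <;> omega
  · rintro ⟨⟨i, j⟩, ⟨k, l⟩⟩ h
    simp only [Finset.mem_filter, mem_outPairs] at h
    refine Sigma.ext (Prod.ext ?_ ?_) (heq_of_eq (Prod.ext ?_ ?_)) <;> simp only <;> omega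
  · rintro ⟨⟨i, j⟩, ⟨k, l⟩⟩ h
    simp only [Finset.mem_filter, mem_outPairs] at h
    exact hfg i j k l h.1.2.2.1 h.2 h.1.1 h.1.2.1

theorem sum_split {𝒜 M : Type*} [AddCommMonoid M] (w : List 𝒜)
    (f : (_ : ℕ × ℕ) × (ℕ × ℕ) → M) :
    ∑ x ∈ outPairs w, f x = ∑ x ∈ outPairs w with (x.2.1 < x.1.1 ∧ x.1.1 ≤ x.2.2), f x +
      (∑ x ∈ outPairs w with x.2.2 < x.1.1, f x + ∑ x ∈ outPairs w with x.1.1 ≤ x.2.1, f x) := by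
  simp only [Finset.sum_filter, ← Finset.sum_add_distrib]
  refine Finset.sum_congr rfl ?_
  rintro ⟨⟨i, j⟩, ⟨k, l⟩⟩ h
  simp only [mem_outPairs] at h ⊢
  split_ifs <;> first | omega | simp

theorem tilde_single {R 𝒜 : Type*} [CommRing R] (μ : 𝒜 → 𝒜 → R)
    (ρ : AllWordModule R 𝒜 →ₗ[R] AllWordModule R 𝒜 ⊗[R] AllWordModule R 𝒜)
    (hρ : ∀ w : List 𝒜,
      ρ (Finsupp.single w 1) =
        ∑ p ∈ simpleInscriptions w,
          muCoeff μ w p.1 p.2 •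
            (Finsupp.single (inW w p) (1 : R) ⊗ₜ[R] Finsupp.single (outW w p) (1 : R)))
    (w : List 𝒜) :
    tilde ρ (Finsupp.single w 1) = ∑ x ∈ outPairs w with x.2.2 < x.1.1, outTerm μ w x +
      ∑ x ∈ outPairs w with x.1.1 ≤ x.2.1, outTerm μ w x := by
  have hA : LinearMap.lTensor (AllWordModule R 𝒜) ρ (ρ (Finsupp.single w 1)) =
      ∑ x ∈ outPairs w, outTerm μ w x := by
    rw [hρ, outPairs, Finset.sum_sigma, map_sum]
    refine Finset.sum_congr rfl fun p _ => ?_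
    rw [map_smul, LinearMap.lTensor_tmul, hρ, TensorProduct.tmul_sum, Finset.smul_sum]
    refine Finset.sum_congr rfl fun q _ => ?_
    rw [TensorProduct.tmul_smul, smul_smul]
    rfl
  have hB : (TensorProduct.assoc R (AllWordModule R 𝒜) (AllWordModule R 𝒜) (AllWordModule R 𝒜))
      (LinearMap.rTensor (AllWordModule R 𝒜) ρ (ρ (Finsupp.single w 1))) =
      ∑ x ∈ inPairs w, inTerm μ w x := by
    rw [hρ, inPairs, Finset.sum_sigma, map_sum, map_sum]
    refine Finset.sum_congr rfl fun p _ => ?_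
    rw [map_smul, map_smul, LinearMap.rTensor_tmul, hρ, TensorProduct.sum_tmul, map_sum,
      Finset.smul_sum]
    refine Finset.sum_congr rfl fun q _ => ?_
    rw [← TensorProduct.smul_tmul', map_smul, smul_smul, TensorProduct.assoc_tmul]
    rfl
  change LinearMap.lTensor (AllWordModule R 𝒜) ρ (ρ (Finsupp.single w 1)) -
    (TensorProduct.assoc R (AllWordModule R 𝒜) (AllWordModule R 𝒜) (AllWordModule R 𝒜))
      (LinearMap.rTensor (AllWordModule R 𝒜) ρ (ρ (Finsupp.single w 1))) = _
  rw [hA, hB, sum_split, sum_nested]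
  exact add_sub_cancel_left
    (G := AllWordModule R 𝒜 ⊗[R] (AllWordModule R 𝒜 ⊗[R] AllWordModule R 𝒜))
    (∑ x ∈ inPairs w, inTerm μ w x) _

/-- for any map `μ : 𝒜 × 𝒜 → R`, the comultiplication
`ρ_μ(w) = Σ_{a † w} μ(w|_a) l_a(w) ⊗ r_a(w)` on the free module `W` on all words is
pre-Lie: `P^{1,2} ρ̃_μ = ρ̃_μ`. -/
theorem stmt_10 {R 𝒜 : Type*} [CommRing R] (μ : 𝒜 → 𝒜 → R)
    (ρ : AllWordModule R 𝒜 →ₗ[R] AllWordModule R 𝒜 ⊗[R] AllWordModule R 𝒜)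
    (hρ : ∀ w : List 𝒜,
      ρ (Finsupp.single w 1) =
        ∑ p ∈ simpleInscriptions w,
          muCoeff μ w p.1 p.2 •
            (Finsupp.single ((w.drop (p.1 + 1)).take (p.2 - p.1 - 1)) (1 : R) ⊗ₜ[R]
              Finsupp.single (w.take p.1 ++ w.drop (p.2 + 1)) (1 : R))) :
    (TensorProduct.leftComm R (AllWordModule R 𝒜) (AllWordModule R 𝒜)
        (AllWordModule R 𝒜)).toLinearMap ∘ₗ tilde ρ = tilde ρ := by
  apply Finsupp.lhom_ext'
  intro w
  apply LinearMap.ext_ring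
  simp only [LinearMap.comp_apply, LinearEquiv.coe_coe, Finsupp.lsingle_apply]
  rw [tilde_single μ ρ hρ w, map_add, map_sum, map_sum]
  have hs : ∀ x, TensorProduct.leftComm R (AllWordModule R 𝒜) (AllWordModule R 𝒜)
        (AllWordModule R 𝒜) (outTerm μ w x) = outTermSwap μ w x := by
    intro x
    simp only [outTerm, outTermSwap, trip, map_smul, TensorProduct.leftComm_tmul]
  simp only [hs]
  rw [sum_disjoint w _ _ (disjoint_term μ w), ← sum_disjoint w _ _ (disjoint_term_symm μ w), add_comm]
end

section
/- Let 𝒜 be an alphabet, L a stable set of nonempty words, and V the free R-module on nonempty words. Define a bilinear operation ∘_L on V by: for words w = A_1…A_m and x = B_1…B_n (m, n ≥ 1), w ∘_L x = 0 if w ∉ L, and w ∘_L x = Σ_{i=0}^{n} B_1…B_i A_1…A_m B_{i+1}…B_n if w ∈ L. Then ∘_L is a pre-Lie multiplication on V, i.e. f ∘_L (g ∘_L h) − (f ∘_L g) ∘_L h = g ∘_L (f ∘_L h) − (g ∘_L f) ∘_L h for all f, g, h ∈ V. -/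
open scoped Classical

theorem aux_sum {M : Type*} [AddCommMonoid M] (n m : ℕ) (F : ℕ → ℕ → M) :
    ∑ i ∈ Finset.range (n + 1), ∑ j ∈ Finset.range (n + m + 1), F i j =
      (∑ i ∈ Finset.range (n + 1), ∑ k ∈ Finset.range (m + 1), F i (i + k)) +
      (∑ i ∈ Finset.range (n + 1), ∑ j ∈ Finset.range i, F i j) +
      (∑ j ∈ Finset.range (n + 1), ∑ i ∈ Finset.range j, F i (j + m)) := by
  have h3 : (∑ j ∈ Finset.range (n + 1), ∑ i ∈ Finset.range j, F i (j + m)) =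
      ∑ i ∈ Finset.range (n + 1), ∑ j ∈ Finset.Ico (i + 1) (n + 1), F i (j + m) := by
    apply Finset.sum_comm'
    intro x y
    simp only [Finset.mem_range, Finset.mem_Ico]
    omega
  rw [h3, ← Finset.sum_add_distrib, ← Finset.sum_add_distrib]
  refine Finset.sum_congr rfl fun i hi => ?_
  have hi' : i < n + 1 := Finset.mem_range.1 hi
  rw [Finset.sum_Ico_eq_sum_range]
  have e : n + m + 1 = i + (m + 1) + (n + 1 - (i + 1)) := by omega
  rw [e, Finset.sum_range_add, Finset.sum_range_add, add_comm (∑ x ∈ Finset.range i, F i x)]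
  congr 1
  refine Finset.sum_congr rfl fun k _ => ?_
  congr 1
  omega

/-- Inserting `w` into `x` at position `i`. -/
def ins {𝒜 : Type*} (w x : List 𝒜) (i : ℕ) : List 𝒜 := x.take i ++ w ++ x.drop i

theorem ins_length {𝒜 : Type*} (w x : List 𝒜) (i : ℕ) :
    (ins w x i).length = x.length + w.length := by
  simp only [ins, List.length_append, List.length_take, List.length_drop]
  omega

theorem ins_ne {𝒜 : Type*} (w x : List 𝒜) (i : ℕ) (hw : w ≠ []) : ins w x i ≠ [] := by
  simp [ins, hw]

theorem ins_mid {𝒜 : Type*} (f g h : List 𝒜) (i k : ℕ) (hi : i ≤ h.length)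
    (hk : k ≤ g.length) : ins f (ins g h i) (i + k) = ins (ins f g k) h i := by
  obtain ⟨a, b, rfl, rfl⟩ : ∃ a b, h = a ++ b ∧ i = a.length :=
    ⟨h.take i, h.drop i, by simp, by simp [hi]⟩
  obtain ⟨c, d, rfl, rfl⟩ : ∃ c d, g = c ++ d ∧ k = c.length :=
    ⟨g.take k, g.drop k, by simp, by simp [hk]⟩
  have t : a.take (a.length + c.length) = a := List.take_of_length_le (by omega)
  have u : a.drop (a.length + c.length) = [] := List.drop_eq_nil_of_le (by omega)
  simp [ins, List.take_append, List.drop_append, t, u]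

theorem ins_far {𝒜 : Type*} (f g h : List 𝒜) (i j : ℕ) (hi : i < j) (hj : j ≤ h.length) :
    ins f (ins g h i) (j + g.length) = ins g (ins f h j) i := by
  obtain ⟨a, b, rfl, rfl⟩ : ∃ a b, h = a ++ b ∧ j = a.length :=
    ⟨h.take j, h.drop j, by simp, by simp [hj]⟩
  obtain ⟨c, d, rfl, rfl⟩ : ∃ c d, a = c ++ d ∧ i = c.length :=
    ⟨a.take i, a.drop i, by simp, by simp [hi.le]⟩
  have e : c.length + d.length + g.length = (c ++ g ++ d).length := by
    simp only [List.length_append]; omega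
  have e1 : ins g (c ++ d ++ b) c.length = (c ++ g ++ d) ++ b := by simp [ins]
  have e2 : ins f (c ++ d ++ b) (c ++ d).length = c ++ (d ++ f ++ b) := by
    rw [ins, List.take_left, List.drop_left]; simp
  rw [e1, e2, List.length_append, e, ins, ins, List.take_left, List.drop_left,
    List.take_left, List.drop_left]
  simp

theorem ins_stable {𝒜 : Type*} {L : Set (List 𝒜)} (hL : IsStable L) (w x : List 𝒜) (i : ℕ)
    (hw : w ∈ L) (hw0 : w ≠ []) (hx : x ≠ []) (hi : i ≤ x.length) :
    ins w x i ∈ L ↔ x ∈ L := by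
  obtain ⟨a, b, rfl, rfl⟩ : ∃ a b, x = a ++ b ∧ i = a.length :=
    ⟨x.take i, x.drop i, by simp, by simp [hi]⟩
  have hwl := List.length_pos_iff.2 hw0
  have hxl := List.length_pos_iff.2 hx
  have e : ins w (a ++ b) a.length = a ++ (w ++ b) := by simp [ins]
  rw [List.length_append] at hxl
  have := hL (a ++ (w ++ b)) a.length (a.length + w.length) (by omega)
    (by simp only [List.length_append]; omega) (by simp only [List.length_append]; omega)
    (by simpa using hw)
  rw [e, this]
  have u : a.drop (a.length + w.length) = [] := List.drop_eq_nil_of_le (by omega)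
  simp [List.drop_append, u]

theorem wv_span {R 𝒜 : Type*} [CommRing R] {P : WordModule R 𝒜 → Prop} (f : WordModule R 𝒜)
    (h0 : P 0) (ha : ∀ f g, P f → P g → P (f + g)) (hs : ∀ (r : R) f, P f → P (r • f))
    (hw : ∀ w : List 𝒜, w ≠ [] → P (wv R w)) : P f := by
  induction f using Finsupp.induction_linear with
  | zero => exact h0
  | add f g hf hg => exact ha f g hf hg
  | single w r =>
    have := hs r _ (hw w.1 w.2)
    rw [wv, dif_neg w.2] at this
    simpa using this

/-- the operation `w ∘_L x = Σ_{i=0}^{n} B_1…B_i A_1…A_m B_{i+1}…B_n`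
(for `w ∈ L`, and `0` otherwise) is a left pre-Lie multiplication on the free module `V`
on nonempty words. -/
theorem stmt_17 {R 𝒜 : Type*} [CommRing R]
    (L : Set (List 𝒜)) (hL0 : ∀ w ∈ L, w ≠ []) (hL : IsStable L)
    (circ : WordModule R 𝒜 →ₗ[R] WordModule R 𝒜 →ₗ[R] WordModule R 𝒜)
    (hcirc0 : ∀ w x : List 𝒜, w ≠ [] → x ≠ [] → w ∉ L →
      circ (wv R w) (wv R x) = 0)
    (hcirc1 : ∀ w x : List 𝒜, w ≠ [] → x ≠ [] → w ∈ L →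
      circ (wv R w) (wv R x) =
        ∑ i ∈ Finset.range (x.length + 1), wv R (x.take i ++ w ++ x.drop i)) :
    ∀ f g h : WordModule R 𝒜,
      circ f (circ g h) - circ (circ f g) h =
        circ g (circ f h) - circ (circ g f) h := by
  have c1 : ∀ w x : List 𝒜, w ≠ [] → x ≠ [] → w ∈ L → circ (wv R w) (wv R x) =
      ∑ i ∈ Finset.range (x.length + 1), wv R (ins w x i) := hcirc1
  have c0 : ∀ (w : List 𝒜), w ≠ [] → w ∉ L → ∀ v, circ (wv R w) v = 0 := by
    intro w hw hwL v
    induction v using wv_span with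
    | h0 => simp
    | ha f g hf hg => simp [hf, hg]
    | hs r f hf => simp [hf]
    | hw x hx => exact hcirc0 w x hw hx hwL
  -- one factor outside `L`: everything vanishes
  have van : ∀ u v : List 𝒜, u ≠ [] → v ≠ [] → v ∉ L → ∀ z,
      circ (circ (wv R u) (wv R v)) z = 0 := by
    intro u v hu hv hvL z
    by_cases huL : u ∈ L
    · rw [c1 u v hu hv huL, map_sum, LinearMap.sum_apply]
      refine Finset.sum_eq_zero fun i hi => c0 _ (ins_ne _ _ _ hu) ?_ z
      rw [ins_stable hL u v i huL hu hv (by have := Finset.mem_range.1 hi; omega)]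
      exact hvL
    · rw [c0 u hu huL, map_zero, LinearMap.zero_apply]
  have key : ∀ f g h : List 𝒜, f ≠ [] → g ≠ [] → h ≠ [] → f ∈ L → g ∈ L →
      circ (wv R f) (circ (wv R g) (wv R h)) - circ (circ (wv R f) (wv R g)) (wv R h) =
      (∑ i ∈ Finset.range (h.length + 1), ∑ j ∈ Finset.range i, wv R (ins f (ins g h i) j)) +
      ∑ i ∈ Finset.range (h.length + 1), ∑ j ∈ Finset.range i, wv R (ins g (ins f h i) j) := by
    intro f g h hf hg hh hfL hgL
    have e1 : circ (wv R f) (circ (wv R g) (wv R h)) =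
        ∑ i ∈ Finset.range (h.length + 1), ∑ j ∈ Finset.range (h.length + g.length + 1),
          wv R (ins f (ins g h i) j) := by
      rw [c1 g h hg hh hgL, map_sum]
      refine Finset.sum_congr rfl fun i _ => ?_
      rw [c1 f _ hf (ins_ne _ _ _ hg) hfL, ins_length]
    have e2 : circ (circ (wv R f) (wv R g)) (wv R h) =
        ∑ i ∈ Finset.range (h.length + 1), ∑ k ∈ Finset.range (g.length + 1),
          wv R (ins f (ins g h i) (i + k)) := by
      rw [c1 f g hf hg hfL, map_sum, LinearMap.sum_apply, Finset.sum_comm]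
      refine Finset.sum_congr rfl fun k hk => ?_
      have hk' := Finset.mem_range.1 hk
      rw [c1 _ h (ins_ne _ _ _ hf) hh
        ((ins_stable hL f g k hfL hf hg (by omega)).2 hgL)]
      refine Finset.sum_congr rfl fun i hi => ?_
      have hi' := Finset.mem_range.1 hi
      rw [ins_mid f g h i k (by omega) (by omega)]
    rw [e1, e2, aux_sum, add_assoc, add_sub_cancel_left]
    congr 1
    refine Finset.sum_congr rfl fun j hj => Finset.sum_congr rfl fun i hi => ?_
    have hj' := Finset.mem_range.1 hj
    rw [ins_far f g h i j (Finset.mem_range.1 hi) (by omega)]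
  intro f g h
  induction f using wv_span with
  | h0 => simp
  | ha a b ha hb =>
    simp only [map_add, LinearMap.add_apply]
    rw [add_sub_add_comm, add_sub_add_comm, ha, hb]
  | hs r a ha =>
    simp only [map_smul, LinearMap.smul_apply]
    rw [← smul_sub, ← smul_sub, ha]
  | hw f hf =>
  induction g using wv_span with
  | h0 => simp
  | ha a b ha hb =>
    simp only [map_add, LinearMap.add_apply]
    rw [add_sub_add_comm, add_sub_add_comm, ha, hb]
  | hs r a ha =>
    simp only [map_smul, LinearMap.smul_apply]
    rw [← smul_sub, ← smul_sub, ha]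
  | hw g hg =>
  induction h using wv_span with
  | h0 => simp
  | ha a b ha hb =>
    simp only [map_add]
    rw [add_sub_add_comm, add_sub_add_comm, ha, hb]
  | hs r a ha =>
    simp only [map_smul]
    rw [← smul_sub, ← smul_sub, ha]
  | hw h hh =>
  by_cases hfL : f ∈ L
  · by_cases hgL : g ∈ L
    · rw [key f g h hf hg hh hfL hgL, key g f h hg hf hh hgL hfL, add_comm]
    · rw [van f g hf hg hgL, c0 g hg hgL, c0 g hg hgL, c0 g hg hgL]
      simp
  · rw [van g f hg hf hfL, c0 f hf hfL, c0 f hf hfL, c0 f hf hfL]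
    simp
end

section
/- Let 𝒜 be an alphabet, let μ : 𝒜 × 𝒜 → R send (A, B) to 1 if A = B and to 0 otherwise, and let W be the free R-module on all words with the pre-Lie comultiplication ρ_μ. Call a word w unlaced if (i) every letter of 𝒜 appears in w either zero times or exactly twice, and (ii) for any distinct letters A, B appearing in w, the word ABAB is not a subword (subsequence) of w. Let U ⊆ W be the free R-submodule generated by the unlaced words (including the empty word). Then ρ_μ(U) ⊆ U ⊗ U. -/
open scoped TensorProduct Classical

/-- A word is unlaced if every letter appears in it zero times or exactly twice, and for
any two distinct letters `a, b` appearing in it, `abab` is not a subword (subsequence). -/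
def Unlaced {𝒜 : Type*} [DecidableEq 𝒜] (w : List 𝒜) : Prop :=
  (∀ a : 𝒜, w.count a = 0 ∨ w.count a = 2) ∧
    (∀ a b : 𝒜, a ∈ w → b ∈ w → a ≠ b → ¬ [a, b, a, b].Sublist w)

theorem unlaced_split {𝒜 : Type*} [DecidableEq 𝒜] (x y z : List 𝒜) (a : 𝒜)
    (h : Unlaced (x ++ (a :: (y ++ (a :: z))))) : Unlaced y ∧ Unlaced (x ++ z) := by
  obtain ⟨h1, h2⟩ := h
  have sy : y.Sublist (x ++ (a :: (y ++ (a :: z)))) :=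
    ((List.sublist_append_left y (a :: z)).cons a).trans (List.sublist_append_right _ _)
  have sxz : (x ++ z).Sublist (x ++ (a :: (y ++ (a :: z)))) :=
    List.Sublist.append (List.Sublist.refl x)
      (((List.sublist_cons_self a z).trans (List.sublist_append_right y _)).cons a)
  have key : ∀ b, (y.count b = 0 ∨ y.count b = 2) ∧
      ((x ++ z).count b = 0 ∨ (x ++ z).count b = 2) := by
    intro b
    have hb := h1 b
    by_cases hab : a = b
    · subst hab
      simp only [List.count_append, List.count_cons_self] at hb ⊢
      omega
    · have ha : a ∈ (x ++ (a :: (y ++ (a :: z)))) := by simp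
      simp only [List.count_append, List.count_cons_of_ne hab] at hb ⊢
      by_cases hy : b ∈ y
      · have hbw : b ∈ (x ++ (a :: (y ++ (a :: z)))) := by simp [hy]
        have hx : b ∉ x := by
          intro hx
          apply h2 b a hbw ha (Ne.symm hab)
          have e1 : [b].Sublist x := List.singleton_sublist.2 hx
          have e2 : [b].Sublist y := List.singleton_sublist.2 hy
          have e3 : [a].Sublist (a :: z) := by simp
          exact e1.append ((e2.append e3).cons_cons a)
        have hz : b ∉ z := by
          intro hz
          apply h2 a b ha hbw hab
          have e1 : [b].Sublist z := List.singleton_sublist.2 hz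
          have e2 : [b].Sublist y := List.singleton_sublist.2 hy
          exact ((e2.append (e1.cons_cons a)).cons_cons a).trans (List.sublist_append_right _ _)
        have := List.count_eq_zero.2 hx
        have := List.count_eq_zero.2 hz
        omega
      · have := List.count_eq_zero.2 hy
        omega
  refine ⟨⟨fun b => (key b).1, fun b c hb hc hbc hs => ?_⟩,
    ⟨fun b => (key b).2, fun b c hb hc hbc hs => ?_⟩⟩
  · exact h2 b c (sy.subset hb) (sy.subset hc) hbc (hs.trans sy)
  · exact h2 b c (sxz.subset hb) (sxz.subset hc) hbc (hs.trans sxz)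

theorem word_split {𝒜 : Type*} (w : List 𝒜) (i j : ℕ) (hij : i < j) (hj : j < w.length) :
    w = w.take i ++ (w[i] :: ((w.drop (i + 1)).take (j - i - 1) ++ (w[j] :: w.drop (j + 1)))) := by
  have e : w[j] :: w.drop (j + 1) = (w.drop (i + 1)).drop (j - i - 1) := by
    rw [List.drop_drop, show i + 1 + (j - i - 1) = j by omega]
    exact (List.drop_eq_getElem_cons hj).symm
  rw [e, List.take_append_drop, ← List.drop_eq_getElem_cons, List.take_append_drop]

/-- for `μ(A,B) = δ_{A,B}`, the span `U` of unlaced words satisfies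
`ρ_μ(U) ⊆ U ⊗ U`. -/
theorem stmt_19 {R 𝒜 : Type*} [CommRing R] [DecidableEq 𝒜]
    (μ : 𝒜 → 𝒜 → R) (hμ : ∀ a b : 𝒜, μ a b = if a = b then 1 else 0)
    (ρ : AllWordModule R 𝒜 →ₗ[R] AllWordModule R 𝒜 ⊗[R] AllWordModule R 𝒜)
    (hρ : ∀ w : List 𝒜,
      ρ (Finsupp.single w 1) =
        ∑ p ∈ simpleInscriptions w,
          muCoeff μ w p.1 p.2 •
            (Finsupp.single ((w.drop (p.1 + 1)).take (p.2 - p.1 - 1)) (1 : R) ⊗ₜ[R]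
              Finsupp.single (w.take p.1 ++ w.drop (p.2 + 1)) (1 : R)))
    (U : Submodule R (AllWordModule R 𝒜))
    (hU : U = Submodule.span R
      {x : AllWordModule R 𝒜 | ∃ w : List 𝒜, Unlaced w ∧ x = Finsupp.single w 1}) :
    ∀ x ∈ U, ρ x ∈ LinearMap.range (TensorProduct.map U.subtype U.subtype) := by
  intro x hx
  rw [hU] at hx
  induction hx using Submodule.span_induction with
  | zero => simp
  | add x y _ _ hx hy => rw [map_add]; exact add_mem hx hy
  | smul r x _ hx => rw [map_smul]; exact Submodule.smul_mem _ r hx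
  | mem x hx =>
    obtain ⟨w, hw, rfl⟩ := hx
    rw [hρ]
    refine Submodule.sum_mem _ fun p hp => ?_
    obtain ⟨i, j⟩ := p
    simp only [simpleInscriptions, Finset.mem_filter, Finset.mem_product, Finset.mem_range] at hp
    obtain ⟨⟨hi, hj⟩, hij⟩ := hp
    by_cases hc : w[i] = w[j]
    · apply Submodule.smul_mem
      have hs := word_split w i j hij hj
      rw [← hc] at hs
      have hw' := hw
      rw [hs] at hw'
      obtain ⟨u1, u2⟩ := unlaced_split _ _ _ _ hw'
      have m : ∀ v : List 𝒜, Unlaced v → (Finsupp.single v (1 : R)) ∈ U := by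
        intro v hv
        rw [hU]
        exact Submodule.subset_span ⟨v, hv, rfl⟩
      exact ⟨(⟨_, m _ u1⟩ : U) ⊗ₜ[R] (⟨_, m _ u2⟩ : U), by simp [TensorProduct.map_tmul]⟩
    · have : muCoeff μ w i j = 0 := by
        simp [muCoeff, hi, hj, hμ, hc]
      simp [this]
end
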